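/- arXiv:1510.07098 — 5 statements merged into one kernel-verified Lean document; each statement's English description precedes it below -/
import Mathlib

section
/- Let ℰ be an exact structure on an abelian category 𝒜 such that 𝒜 has enough ℰ-projectives and enough ℰ-injectives, and let (𝒳,𝒴) be a complete hereditary classical cotorsion pair in 𝒜. If 𝒴 contains all ℰ-injective objects of 𝒜, then (^⊥ℰ𝒴, 𝒴) is a complete hereditary ℰ-cotorsion pair and every object A of 𝒜 admits an epimorphic ^⊥ℰ𝒴-precover p : X → A with Ker p ∈ 𝒴. -/
open CategoryTheory Category Limits

universe v u

namespace ExactPaper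

variable {𝒜 : Type u} [Category.{v} 𝒜] [Abelian 𝒜]

/-- A morphism is an admissible monic w.r.t. a class `c` of short complexes if it occurs
as the first map of a member of `c`. -/
def AdmMono (c : ShortComplex 𝒜 → Prop) {X Y : 𝒜} (f : X ⟶ Y) : Prop :=
  ∃ (Z : 𝒜) (g : Y ⟶ Z) (w : f ≫ g = 0), c (ShortComplex.mk f g w)

/-- A morphism is an admissible epic w.r.t. a class `c` of short complexes if it occurs
as the second map of a member of `c`. -/
def AdmEpi (c : ShortComplex 𝒜 → Prop) {Y Z : 𝒜} (g : Y ⟶ Z) : Prop :=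
  ∃ (X : 𝒜) (f : X ⟶ Y) (w : f ≫ g = 0), c (ShortComplex.mk f g w)

/-- A (Quillen) exact structure on an abelian category `𝒜`: a class of short exact
sequences, called conflations, closed under isomorphisms, containing all split short
exact sequences, such that admissible monics and epics are closed under composition,
pushouts of admissible monics along arbitrary morphisms are admissible monics and
pullbacks of admissible epics along arbitrary morphisms are admissible epics. -/
structure ExactStructure (𝒜 : Type u) [Category.{v} 𝒜] [Abelian 𝒜] where
  conflation : ShortComplex 𝒜 → Prop
  shortExact_of_conflation : ∀ (S : ShortComplex 𝒜), conflation S → S.ShortExact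
  conflation_of_iso : ∀ (S T : ShortComplex 𝒜), (S ≅ T) → conflation S → conflation T
  conflation_of_splitting : ∀ (S : ShortComplex 𝒜), S.Splitting → conflation S
  admMono_comp : ∀ {X Y Z : 𝒜} (f : X ⟶ Y) (g : Y ⟶ Z),
    AdmMono conflation f → AdmMono conflation g → AdmMono conflation (f ≫ g)
  admEpi_comp : ∀ {X Y Z : 𝒜} (f : X ⟶ Y) (g : Y ⟶ Z),
    AdmEpi conflation f → AdmEpi conflation g → AdmEpi conflation (f ≫ g)
  admMono_pushout : ∀ {L M M' : 𝒜} (i : L ⟶ M) (f : L ⟶ M'),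
    AdmMono conflation i → AdmMono conflation (pushout.inr i f)
  admEpi_pullback : ∀ {M N M' : 𝒜} (p : M ⟶ N) (g : M' ⟶ N),
    AdmEpi conflation p → AdmEpi conflation (pullback.snd p g)

namespace ExactStructure

variable (E : ExactStructure 𝒜)

/-- An `ℰ`-projective object. -/
def EProjective (P : 𝒜) : Prop :=
  ∀ (S : ShortComplex 𝒜), E.conflation S → ∀ h : P ⟶ S.X₃, ∃ k : P ⟶ S.X₂, k ≫ S.g = h

/-- An `ℰ`-injective object. -/
def EInjective (I : 𝒜) : Prop :=
  ∀ (S : ShortComplex 𝒜), E.conflation S → ∀ h : S.X₁ ⟶ I, ∃ k : S.X₂ ⟶ I, S.f ≫ k = h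

/-- `𝒜` has enough `ℰ`-projectives. -/
def EnoughProjectives : Prop :=
  ∀ M : 𝒜, ∃ (K P : 𝒜) (i : K ⟶ P) (p : P ⟶ M) (w : i ≫ p = 0),
    E.conflation (ShortComplex.mk i p w) ∧ E.EProjective P

/-- `𝒜` has enough `ℰ`-injectives. -/
def EnoughInjectives : Prop :=
  ∀ M : 𝒜, ∃ (I C : 𝒜) (i : M ⟶ I) (p : I ⟶ C) (w : i ≫ p = 0),
    E.conflation (ShortComplex.mk i p w) ∧ E.EInjective I

/-- `Ext¹_ℰ(M,N) = 0`: every conflation `0 → N → Z → M → 0` splits. -/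
def Ext1Zero (M N : 𝒜) : Prop :=
  ∀ (Z : 𝒜) (i : N ⟶ Z) (p : Z ⟶ M) (w : i ≫ p = 0),
    E.conflation (ShortComplex.mk i p w) → ∃ r : Z ⟶ N, i ≫ r = 𝟙 N

/-- The right `ℰ`-orthogonal class `𝒳^⊥`. -/
def rightPerp (𝒳 : Set 𝒜) : Set 𝒜 := {N | ∀ X ∈ 𝒳, E.Ext1Zero X N}

/-- The left `ℰ`-orthogonal class `^⊥𝒴`. -/
def leftPerp (𝒴 : Set 𝒜) : Set 𝒜 := {M | ∀ Y ∈ 𝒴, E.Ext1Zero M Y}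

/-- A class is closed under `ℰ`-extensions. -/
def ClosedUnderExtensions (𝒯 : Set 𝒜) : Prop :=
  ∀ S : ShortComplex 𝒜, E.conflation S → S.X₁ ∈ 𝒯 → S.X₃ ∈ 𝒯 → S.X₂ ∈ 𝒯

/-- An `ℰ`-resolving class. -/
def Resolving (𝒯 : Set 𝒜) : Prop :=
  (∀ P : 𝒜, E.EProjective P → P ∈ 𝒯) ∧ E.ClosedUnderExtensions 𝒯 ∧
    ∀ S : ShortComplex 𝒜, E.conflation S → S.X₂ ∈ 𝒯 → S.X₃ ∈ 𝒯 → S.X₁ ∈ 𝒯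

/-- An `ℰ`-coresolving class. -/
def Coresolving (𝒯 : Set 𝒜) : Prop :=
  (∀ I : 𝒜, E.EInjective I → I ∈ 𝒯) ∧ E.ClosedUnderExtensions 𝒯 ∧
    ∀ S : ShortComplex 𝒜, E.conflation S → S.X₁ ∈ 𝒯 → S.X₂ ∈ 𝒯 → S.X₃ ∈ 𝒯

/-- `(𝒳,𝒴)` is a complete hereditary `ℰ`-cotorsion pair. -/
def CompleteHereditaryCotorsionPair (𝒳 𝒴 : Set 𝒜) : Prop :=
  𝒳 = E.leftPerp 𝒴 ∧ 𝒴 = E.rightPerp 𝒳 ∧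
  (∀ A : 𝒜, ∃ (Y X : 𝒜) (i : Y ⟶ X) (p : X ⟶ A) (w : i ≫ p = 0),
      E.conflation (ShortComplex.mk i p w) ∧ X ∈ 𝒳 ∧ Y ∈ 𝒴) ∧
  (∀ A : 𝒜, ∃ (Y' X' : 𝒜) (i : A ⟶ Y') (p : Y' ⟶ X') (w : i ≫ p = 0),
      E.conflation (ShortComplex.mk i p w) ∧ X' ∈ 𝒳 ∧ Y' ∈ 𝒴) ∧
  E.Resolving 𝒳

end ExactStructure

/-- `f : X ⟶ A` is an `𝒳`-precover of `A`. -/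
def IsPrecover (𝒳 : Set 𝒜) {X A : 𝒜} (f : X ⟶ A) : Prop :=
  X ∈ 𝒳 ∧ ∀ X' : 𝒜, X' ∈ 𝒳 → ∀ g : X' ⟶ A, ∃ h : X' ⟶ X, h ≫ f = g

/-- `f : X ⟶ A` is an `𝒳`-cover of `A`. -/
def IsCover (𝒳 : Set 𝒜) {X A : 𝒜} (f : X ⟶ A) : Prop :=
  IsPrecover 𝒳 f ∧ ∀ h : X ⟶ X, h ≫ f = f → IsIso h

/-- `f : A ⟶ Y` is a `𝒴`-preenvelope of `A`. -/
def IsPreenvelope (𝒴 : Set 𝒜) {A Y : 𝒜} (f : A ⟶ Y) : Prop :=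
  Y ∈ 𝒴 ∧ ∀ Y' : 𝒜, Y' ∈ 𝒴 → ∀ g : A ⟶ Y', ∃ h : Y ⟶ Y', f ≫ h = g

/-- `f : A ⟶ Y` is a `𝒴`-envelope of `A`. -/
def IsEnvelope (𝒴 : Set 𝒜) {A Y : 𝒜} (f : A ⟶ Y) : Prop :=
  IsPreenvelope 𝒴 f ∧ ∀ h : Y ⟶ Y, f ≫ h = f → IsIso h

/-- A class of objects closed under isomorphisms. -/
def ClosedUnderIsos (𝒳 : Set 𝒜) : Prop := ∀ X Y : 𝒜, (X ≅ Y) → X ∈ 𝒳 → Y ∈ 𝒳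

/-- A class of objects closed under direct summands. -/
def ClosedUnderDirectSummands (𝒳 : Set 𝒜) : Prop :=
  ∀ X Y : 𝒜, (∃ (s : Y ⟶ X) (r : X ⟶ Y), s ≫ r = 𝟙 Y) → X ∈ 𝒳 → Y ∈ 𝒳

end ExactPaper

namespace ExactPaper

open CategoryTheory Limits

variable {𝒜 : Type u} [Category.{v} 𝒜] [Abelian 𝒜]

/-- Classical `Ext¹_𝒜(M,N) = 0`: every short exact sequence `0 → N → Z → M → 0` splits. -/
def Ext1ZeroClassical (M N : 𝒜) : Prop :=
  ∀ (Z : 𝒜) (i : N ⟶ Z) (p : Z ⟶ M) (w : i ≫ p = 0),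
    (ShortComplex.mk i p w).ShortExact → ∃ r : Z ⟶ N, i ≫ r = 𝟙 N

/-- The classical right orthogonal class `𝒳^⊥₁`. -/
def rightPerp1 (𝒳 : Set 𝒜) : Set 𝒜 := {N | ∀ X ∈ 𝒳, Ext1ZeroClassical X N}

/-- The classical left orthogonal class `^⊥₁𝒴`. -/
def leftPerp1 (𝒴 : Set 𝒜) : Set 𝒜 := {M | ∀ Y ∈ 𝒴, Ext1ZeroClassical M Y}

/-- `(𝒳,𝒴)` is a complete hereditary classical cotorsion pair in `𝒜`. -/
def CompleteHereditaryClassicalCotorsionPair (𝒳 𝒴 : Set 𝒜) : Prop :=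
  𝒳 = leftPerp1 𝒴 ∧ 𝒴 = rightPerp1 𝒳 ∧
  (∀ A : 𝒜, ∃ (Y X : 𝒜) (i : Y ⟶ X) (p : X ⟶ A) (w : i ≫ p = 0),
      (ShortComplex.mk i p w).ShortExact ∧ X ∈ 𝒳 ∧ Y ∈ 𝒴) ∧
  (∀ A : 𝒜, ∃ (Y' X' : 𝒜) (i : A ⟶ Y') (p : Y' ⟶ X') (w : i ≫ p = 0),
      (ShortComplex.mk i p w).ShortExact ∧ X' ∈ 𝒳 ∧ Y' ∈ 𝒴) ∧
  (∀ (S : ShortComplex 𝒜), S.ShortExact → S.X₂ ∈ 𝒳 → S.X₃ ∈ 𝒳 → S.X₁ ∈ 𝒳)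

end ExactPaper


namespace ExactPaper

variable {𝒜 : Type u} [Category.{v} 𝒜] [Abelian 𝒜]

/-- The pushout of a short exact sequence is short exact. -/
theorem shortExact_pushout {A B C D : 𝒜} {i : A ⟶ B} {p : B ⟶ C} {w : i ≫ p = 0}
    (h : (ShortComplex.mk i p w).ShortExact) (f : A ⟶ D) :
    ∃ (q : pushout i f ⟶ C) (w' : pushout.inr i f ≫ q = 0),
      pushout.inl i f ≫ q = p ∧ (ShortComplex.mk (pushout.inr i f) q w').ShortExact := by
  have : Mono i := h.mono_f
  have : Epi p := h.epi_g
  refine ⟨pushout.desc p 0 (by simp [w]), pushout.inr_desc _ _ _, pushout.inl_desc _ _ _, ?_⟩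
  have : Epi (pushout.desc p 0 (by simp [w]) : pushout i f ⟶ C) := by
    have : Epi (pushout.inl i f ≫ (pushout.desc p 0 (by simp [w]) : pushout i f ⟶ C)) := by
      rw [pushout.inl_desc]; infer_instance
    exact epi_of_epi (pushout.inl i f) _
  refine ShortComplex.ShortExact.mk' ?_ (by dsimp; infer_instance) (by dsimp; infer_instance)
  apply ShortComplex.exact_of_g_is_cokernel
  refine CokernelCofork.IsColimit.ofπ' _ _ (fun {T} k hk => ?_)
  dsimp at k hk
  have e : i ≫ pushout.inl i f ≫ k = 0 := by
    rw [← Category.assoc, pushout.condition, Category.assoc, hk, comp_zero]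
  refine ⟨h.exact.desc (pushout.inl i f ≫ k) e, ?_⟩
  apply pushout.hom_ext
  · dsimp
    rw [pushout.inl_desc_assoc]
    exact h.exact.g_desc _ e
  · dsimp
    rw [pushout.inr_desc_assoc, zero_comp, hk]

/-- The pullback of a short exact sequence is short exact. -/
theorem shortExact_pullback {A B C D : 𝒜} {i : A ⟶ B} {p : B ⟶ C} {w : i ≫ p = 0}
    (h : (ShortComplex.mk i p w).ShortExact) (f : D ⟶ C) :
    ∃ (j : A ⟶ pullback p f) (w' : j ≫ pullback.snd p f = 0),
      j ≫ pullback.fst p f = i ∧ (ShortComplex.mk j (pullback.snd p f) w').ShortExact := by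
  have : Mono i := h.mono_f
  have : Epi p := h.epi_g
  refine ⟨pullback.lift i 0 (by simp [w]), pullback.lift_snd _ _ _, pullback.lift_fst _ _ _, ?_⟩
  have : Mono (pullback.lift i 0 (by simp [w]) : A ⟶ pullback p f) := by
    have : Mono ((pullback.lift i 0 (by simp [w]) : A ⟶ pullback p f) ≫ pullback.fst p f) := by
      rw [pullback.lift_fst]; infer_instance
    exact mono_of_mono _ (pullback.fst p f)
  refine ShortComplex.ShortExact.mk' ?_ (by dsimp; infer_instance) (by dsimp; infer_instance)
  apply ShortComplex.exact_of_f_is_kernel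
  refine KernelFork.IsLimit.ofι' _ _ (fun {T} k hk => ?_)
  dsimp at k hk
  have e : (k ≫ pullback.fst p f) ≫ p = 0 := by
    rw [Category.assoc, pullback.condition, ← Category.assoc, hk, zero_comp]
  refine ⟨h.exact.lift (k ≫ pullback.fst p f) e, ?_⟩
  apply pullback.hom_ext
  · dsimp
    rw [Category.assoc, pullback.lift_fst]
    exact h.exact.lift_f _ e
  · dsimp
    rw [Category.assoc, pullback.lift_snd, comp_zero, hk]

namespace ExactStructure

variable (E : ExactStructure 𝒜)

theorem conflation_of_admMono {A B C : 𝒜} {i : A ⟶ B} {p : B ⟶ C} {w : i ≫ p = 0}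
    (h : (ShortComplex.mk i p w).ShortExact) (hi : AdmMono E.conflation i) :
    E.conflation (ShortComplex.mk i p w) := by
  obtain ⟨Z, g, w', hc⟩ := hi
  have hs := E.shortExact_of_conflation _ hc
  refine E.conflation_of_iso _ _ ?_ hc
  refine ShortComplex.isoMk (Iso.refl _) (Iso.refl _)
    (IsColimit.coconePointUniqueUpToIso hs.gIsCokernel h.gIsCokernel) (by simp) ?_
  have := IsColimit.comp_coconePointUniqueUpToIso_hom hs.gIsCokernel h.gIsCokernel
    WalkingParallelPair.one
  simpa using this.symm

theorem conflation_of_admEpi {A B C : 𝒜} {i : A ⟶ B} {p : B ⟶ C} {w : i ≫ p = 0}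
    (h : (ShortComplex.mk i p w).ShortExact) (hp : AdmEpi E.conflation p) :
    E.conflation (ShortComplex.mk i p w) := by
  obtain ⟨Z, g, w', hc⟩ := hp
  have hs := E.shortExact_of_conflation _ hc
  refine E.conflation_of_iso _ _ ?_ hc
  refine ShortComplex.isoMk (IsLimit.conePointUniqueUpToIso hs.fIsKernel h.fIsKernel)
    (Iso.refl _) (Iso.refl _) ?_ (by simp)
  have := IsLimit.conePointUniqueUpToIso_hom_comp hs.fIsKernel h.fIsKernel
    WalkingParallelPair.zero
  simpa using this

theorem conflation_pushout {A B C D : 𝒜} {i : A ⟶ B} {p : B ⟶ C} {w : i ≫ p = 0}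
    (h : E.conflation (ShortComplex.mk i p w)) (f : A ⟶ D) :
    ∃ (q : pushout i f ⟶ C) (w' : pushout.inr i f ≫ q = 0),
      pushout.inl i f ≫ q = p ∧ E.conflation (ShortComplex.mk (pushout.inr i f) q w') := by
  obtain ⟨q, w', e, hs⟩ := shortExact_pushout (E.shortExact_of_conflation _ h) f
  exact ⟨q, w', e, E.conflation_of_admMono hs (E.admMono_pushout i f ⟨_, _, _, h⟩)⟩

theorem conflation_pullback {A B C D : 𝒜} {i : A ⟶ B} {p : B ⟶ C} {w : i ≫ p = 0}
    (h : E.conflation (ShortComplex.mk i p w)) (f : D ⟶ C) :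
    ∃ (j : A ⟶ pullback p f) (w' : j ≫ pullback.snd p f = 0),
      j ≫ pullback.fst p f = i ∧
        E.conflation (ShortComplex.mk j (pullback.snd p f) w') := by
  obtain ⟨q, w', e, hs⟩ := shortExact_pullback (E.shortExact_of_conflation _ h) f
  exact ⟨q, w', e, E.conflation_of_admEpi hs (E.admEpi_pullback p f ⟨_, _, _, h⟩)⟩

/-- Extending morphisms along admissible monics. -/
theorem Ext1Zero.extend {E : ExactStructure 𝒜} {A B C Y : 𝒜} {i : A ⟶ B} {p : B ⟶ C}
    {w : i ≫ p = 0} (hE : E.Ext1Zero C Y)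
    (h : E.conflation (ShortComplex.mk i p w)) (f : A ⟶ Y) : ∃ k : B ⟶ Y, i ≫ k = f := by
  obtain ⟨q, w', -, hc⟩ := E.conflation_pushout h f
  obtain ⟨r, hr⟩ := hE _ _ _ _ hc
  refine ⟨pushout.inl i f ≫ r, ?_⟩
  rw [← Category.assoc, pushout.condition, Category.assoc, hr, Category.comp_id]

/-- Lifting morphisms along admissible epics. -/
theorem Ext1Zero.lift {E : ExactStructure 𝒜} {A B C X : 𝒜} {i : A ⟶ B} {p : B ⟶ C}
    {w : i ≫ p = 0} (hE : E.Ext1Zero X A)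
    (h : E.conflation (ShortComplex.mk i p w)) (f : X ⟶ C) : ∃ k : X ⟶ B, k ≫ p = f := by
  obtain ⟨j, w', -, hc⟩ := E.conflation_pullback h f
  obtain ⟨r, hr⟩ := hE _ _ _ _ hc
  have hs := E.shortExact_of_conflation _ hc
  have := hs.epi_g
  have e : j ≫ (𝟙 _ - r ≫ j) = 0 := by
    rw [Preadditive.comp_sub, ← Category.assoc, hr]; simp
  let s : X ⟶ pullback p f := hs.exact.desc (𝟙 _ - r ≫ j) e
  have hs' : pullback.snd p f ≫ s = 𝟙 _ - r ≫ j := hs.exact.g_desc _ e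
  refine ⟨s ≫ pullback.fst p f, ?_⟩
  have : Epi (pullback.snd p f) := hs.epi_g
  rw [← cancel_epi (pullback.snd p f), Category.assoc, pullback.condition, ← Category.assoc,
    ← Category.assoc, hs', Preadditive.sub_comp, Category.assoc, w']
  simp

/-- The obscure axiom in the abelian setting. -/
theorem conflation_of_comp {A B C I : 𝒜} {i : A ⟶ B} {p : B ⟶ C} {w : i ≫ p = 0}
    (h : (ShortComplex.mk i p w).ShortExact) (g : B ⟶ I) {D : 𝒜} {q : I ⟶ D}
    {w' : (i ≫ g) ≫ q = 0} (hc : E.conflation (ShortComplex.mk (i ≫ g) q w')) :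
    E.conflation (ShortComplex.mk i p w) := by
  have := h.epi_g
  have e : i ≫ g ≫ q = 0 := by rw [← Category.assoc, w']
  let d : C ⟶ D := h.exact.desc (g ≫ q) e
  have hd : p ≫ d = g ≫ q := h.exact.g_desc _ e
  obtain ⟨j, wj, ej, hj⟩ := E.conflation_pullback hc d
  have hsj := E.shortExact_of_conflation _ hj
  let φ : ShortComplex.mk i p w ⟶ ShortComplex.mk j (pullback.snd q d) wj :=
    { τ₁ := 𝟙 _
      τ₂ := pullback.lift g p hd.symm
      τ₃ := 𝟙 _
      comm₁₂ := by
        apply pullback.hom_ext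
        · dsimp
          rw [Category.id_comp, ej, Category.assoc, pullback.lift_fst]
        · dsimp
          rw [Category.id_comp, wj, Category.assoc, pullback.lift_snd, w]
      comm₂₃ := by
        dsimp
        rw [pullback.lift_snd, Category.comp_id] }
  have : IsIso φ.τ₁ := by dsimp [φ]; infer_instance
  have : IsIso φ.τ₃ := by dsimp [φ]; infer_instance
  have : IsIso φ.τ₂ := ShortComplex.isIso₂_of_shortExact_of_isIso₁₃ φ h hsj
  have : IsIso φ := ShortComplex.isIso_of_isIso φ
  exact E.conflation_of_iso _ _ (asIso φ).symm hj

/-- Dimension shifting criterion for the vanishing of `Ext¹_ℰ`. -/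
theorem ext1Zero_of_lift {M Y I D : 𝒜} {i : Y ⟶ I} {p : I ⟶ D} {w : i ≫ p = 0}
    (hc : E.conflation (ShortComplex.mk i p w)) (hI : E.EInjective I)
    (hl : ∀ f : M ⟶ D, ∃ k : M ⟶ I, k ≫ p = f) : E.Ext1Zero M Y := by
  intro Z a b wab h
  have hs := E.shortExact_of_conflation _ hc
  have ht := E.shortExact_of_conflation _ h
  have := hs.mono_f
  have := ht.epi_g
  obtain ⟨k, hk⟩ := hI _ h i
  dsimp at k hk
  have e : a ≫ k ≫ p = 0 := by rw [← Category.assoc, hk, w]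
  let d : M ⟶ D := ht.exact.desc (k ≫ p) e
  have hd : b ≫ d = k ≫ p := ht.exact.g_desc _ e
  obtain ⟨l, hl⟩ := hl d
  have e2 : (k - b ≫ l) ≫ p = 0 := by
    rw [Preadditive.sub_comp, Category.assoc, hl, hd, sub_self]
  let r : Z ⟶ Y := hs.exact.lift (k - b ≫ l) e2
  have hr : r ≫ i = k - b ≫ l := hs.exact.lift_f _ e2
  refine ⟨r, ?_⟩
  have : Mono i := hs.mono_f
  rw [← cancel_mono i, Category.assoc, hr, Preadditive.comp_sub, hk, ← Category.assoc, wab]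
  simp

/-- Extensions and kernels in the left orthogonal class. -/
theorem leftPerp_ext (hinj : E.EnoughInjectives) (𝒴 : Set 𝒜) :
    E.ClosedUnderExtensions (E.leftPerp 𝒴) := by
  rintro ⟨a, b, wab⟩ hS h1 h3 Y hY
  obtain ⟨I, D, i, p, w, hc, hI⟩ := hinj Y
  refine E.ext1Zero_of_lift hc hI (fun f => ?_)
  have ht := E.shortExact_of_conflation _ hS
  have := ht.epi_g
  dsimp at *
  obtain ⟨k, hk⟩ := (h1 Y hY).lift hc (a ≫ f)
  obtain ⟨l, hl⟩ := hI _ hS k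
  dsimp at l hl
  have e : a ≫ (f - l ≫ p) = 0 := by
    rw [Preadditive.comp_sub, ← Category.assoc, hl, hk, sub_self]
  obtain ⟨m, hm⟩ := (h3 Y hY).lift hc (ht.exact.desc (f - l ≫ p) e)
  have hd : b ≫ ht.exact.desc (f - l ≫ p) e = f - l ≫ p := ht.exact.g_desc _ e
  refine ⟨l + b ≫ m, ?_⟩
  rw [Preadditive.add_comp, Category.assoc, hm, hd]
  abel

/-- The exact structure of all short exact sequences. -/
def maxStructure (𝒜 : Type u) [Category.{v} 𝒜] [Abelian 𝒜] : ExactStructure 𝒜 :=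
  have hm : ∀ {X Y : 𝒜} (f : X ⟶ Y), Mono f →
      AdmMono (fun S : ShortComplex 𝒜 => S.ShortExact) f := fun f hf =>
    ⟨_, cokernel.π f, cokernel.condition f, ShortComplex.ShortExact.mk'
      (ShortComplex.exact_cokernel f) hf (by dsimp; infer_instance)⟩
  have he : ∀ {X Y : 𝒜} (f : X ⟶ Y), Epi f →
      AdmEpi (fun S : ShortComplex 𝒜 => S.ShortExact) f := fun f hf =>
    ⟨_, kernel.ι f, kernel.condition f, ShortComplex.ShortExact.mk'
      (ShortComplex.exact_kernel f) (by dsimp; infer_instance) hf⟩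
  { conflation := fun S => S.ShortExact
    shortExact_of_conflation := fun _ h => h
    conflation_of_iso := fun _ _ e h => ShortComplex.shortExact_of_iso e h
    conflation_of_splitting := fun _ s => s.shortExact
    admMono_comp := by
      rintro X Y Z f g ⟨_, _, _, h⟩ ⟨_, _, _, h'⟩
      have : Mono f := h.mono_f
      have : Mono g := h'.mono_f
      exact hm _ inferInstance
    admEpi_comp := by
      rintro X Y Z f g ⟨_, _, _, h⟩ ⟨_, _, _, h'⟩
      have : Epi f := h.epi_g
      have : Epi g := h'.epi_g
      exact he _ inferInstance
    admMono_pushout := by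
      rintro X Y Z f g ⟨_, _, _, h⟩
      have : Mono f := h.mono_f
      exact hm _ inferInstance
    admEpi_pullback := by
      rintro X Y Z f g ⟨_, _, _, h⟩
      have : Epi f := h.epi_g
      exact he _ inferInstance }

end ExactStructure

theorem Ext1ZeroClassical.extend {A B C Y : 𝒜} {i : A ⟶ B} {p : B ⟶ C}
    {w : i ≫ p = 0} (hE : Ext1ZeroClassical C Y)
    (h : (ShortComplex.mk i p w).ShortExact) (f : A ⟶ Y) : ∃ k : B ⟶ Y, i ≫ k = f :=
  ExactStructure.Ext1Zero.extend (E := ExactStructure.maxStructure 𝒜) (w := w) hE h f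

theorem Ext1ZeroClassical.lift {A B C X : 𝒜} {i : A ⟶ B} {p : B ⟶ C}
    {w : i ≫ p = 0} (hE : Ext1ZeroClassical X A)
    (h : (ShortComplex.mk i p w).ShortExact) (f : X ⟶ C) : ∃ k : X ⟶ B, k ≫ p = f :=
  ExactStructure.Ext1Zero.lift (E := ExactStructure.maxStructure 𝒜) (w := w) hE h f

theorem summand_mem_rightPerp1 (𝒳 : Set 𝒜) : ClosedUnderDirectSummands (rightPerp1 𝒳) := by
  rintro Y N ⟨s, r, hsr⟩ hY X hX Z i p w h
  obtain ⟨k, hk⟩ := (hY X hX).extend h s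
  exact ⟨k ≫ r, by rw [← Category.assoc, hk, hsr]⟩

/-- In a complete hereditary classical cotorsion pair, the right class is closed under
cokernels of monomorphisms. -/
theorem right_coresolving {𝒳 𝒴 : Set 𝒜}
    (hpair : CompleteHereditaryClassicalCotorsionPair 𝒳 𝒴) {A B C : 𝒜} {i : A ⟶ B} {p : B ⟶ C}
    {w : i ≫ p = 0} (h : (ShortComplex.mk i p w).ShortExact) (hA : A ∈ 𝒴) (hB : B ∈ 𝒴) :
    C ∈ 𝒴 := by
  obtain ⟨-, h𝒴, hpre, -, hher⟩ := hpair
  rw [h𝒴] at hA hB ⊢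
  intro X hX Z a b wab hab
  obtain ⟨Y', X', i', p', w', hs', hX', -⟩ := hpre Z
  have : Epi p' := hs'.epi_g
  have : Epi b := hab.epi_g
  have : Mono a := hab.mono_f
  -- the kernel of `X' ⟶ X` as a pullback
  let K := pullback p' a
  have hK : (ShortComplex.mk (pullback.fst p' a) (p' ≫ b) (by
      rw [← Category.assoc, pullback.condition, Category.assoc, wab, comp_zero])).ShortExact := by
    refine ShortComplex.ShortExact.mk' ?_ (by dsimp; infer_instance) (by dsimp; infer_instance)
    apply ShortComplex.exact_of_f_is_kernel
    refine KernelFork.IsLimit.ofι' _ _ (fun {T} k hk => ?_)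
    dsimp at k hk
    have e : (k ≫ p') ≫ b = 0 := by rw [Category.assoc, hk]
    exact ⟨pullback.lift k (hab.exact.lift (k ≫ p') e) (hab.exact.lift_f _ e).symm,
      pullback.lift_fst _ _ _⟩
  have hKX : K ∈ 𝒳 := hher _ hK hX' hX
  obtain ⟨l, hl⟩ := (hA K hKX).lift h (pullback.snd p' a)
  obtain ⟨m, hm⟩ := (hB X hX).extend hK l
  -- `Y' ⟶ K`
  have e : i' ≫ m ≫ p = 0 := by
    have e1 : pullback.lift i' 0 (by simp [w']) ≫ pullback.fst p' a = i' :=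
      pullback.lift_fst _ _ _
    rw [← e1, Category.assoc, ← Category.assoc (pullback.fst p' a), hm, hl,
      pullback.lift_snd]
  have hr : p' ≫ hs'.exact.desc (m ≫ p) e = m ≫ p := hs'.exact.g_desc _ e
  refine ⟨hs'.exact.desc (m ≫ p) e, ?_⟩
  rw [← cancel_epi (pullback.snd p' a), ← Category.assoc, ← pullback.condition, Category.assoc,
    hr, ← Category.assoc, hm, hl, Category.comp_id]

end ExactPaper

open ExactPaper CategoryTheory Limits in
/-- **Corollary 3.6(2)**: if `(𝒳,𝒴)` is a complete hereditary classical cotorsion pair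
and `𝒴` contains all `ℰ`-injective objects, then `(^⊥ℰ𝒴, 𝒴)` is a complete hereditary
`ℰ`-cotorsion pair and every object `A` admits an epimorphic `^⊥ℰ𝒴`-precover
`p : X ⟶ A` with `Ker p ∈ 𝒴`. -/
theorem eCotorsionPair_of_classical_cotorsionPair_inj
    {𝒜 : Type u} [Category.{v} 𝒜] [Abelian 𝒜]
    (E : ExactStructure 𝒜)
    (hproj : E.EnoughProjectives) (hinj : E.EnoughInjectives)
    (𝒳 𝒴 : Set 𝒜)
    (hpair : CompleteHereditaryClassicalCotorsionPair 𝒳 𝒴)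
    (hI : ∀ I : 𝒜, E.EInjective I → I ∈ 𝒴) :
    E.CompleteHereditaryCotorsionPair (E.leftPerp 𝒴) 𝒴 ∧
      ∀ A : 𝒜, ∃ (X : 𝒜) (p : X ⟶ A),
        Epi p ∧ IsPrecover (E.leftPerp 𝒴) p ∧ kernel p ∈ 𝒴 := by
  have h𝒴 : 𝒴 = rightPerp1 𝒳 := hpair.2.1
  have hsum : ClosedUnderDirectSummands 𝒴 := by
    rw [h𝒴]; exact summand_mem_rightPerp1 𝒳
  have h𝒳 : ∀ X ∈ 𝒳, X ∈ E.leftPerp 𝒴 := by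
    intro X hX Y hY Z i p w hc
    rw [h𝒴] at hY
    exact hY X hX Z i p w (E.shortExact_of_conflation _ hc)
  have hPr : ∀ P : 𝒜, E.EProjective P → P ∈ E.leftPerp 𝒴 := by
    intro P hP Y hY
    obtain ⟨I, D, i, p, w, hc, hII⟩ := hinj Y
    exact E.ext1Zero_of_lift hc hII (fun f => hP _ hc f)
  have hext := E.leftPerp_ext hinj 𝒴
  have henv : ∀ A : 𝒜, ∃ (Y' X' : 𝒜) (i : A ⟶ Y') (p : Y' ⟶ X') (w : i ≫ p = 0),
      E.conflation (ShortComplex.mk i p w) ∧ X' ∈ 𝒳 ∧ Y' ∈ 𝒴 := by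
    intro A
    obtain ⟨Y', X', i, p, w, hs, hX', hY'⟩ := hpair.2.2.2.1 A
    refine ⟨Y', X', i, p, w, ?_, hX', hY'⟩
    obtain ⟨I, D, j, q, wj, hc, hII⟩ := hinj A
    have hIY := hI I hII
    rw [h𝒴] at hIY
    obtain ⟨g, rfl⟩ := (hIY X' hX').extend hs j
    exact E.conflation_of_comp hs g hc
  have hcov : ∀ A : 𝒜, ∃ (Y X : 𝒜) (i : Y ⟶ X) (p : X ⟶ A) (w : i ≫ p = 0),
      E.conflation (ShortComplex.mk i p w) ∧ X ∈ E.leftPerp 𝒴 ∧ Y ∈ 𝒴 := by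
    intro A
    obtain ⟨K, P, i, p, w, hc, hP⟩ := hproj A
    obtain ⟨Y', X', j, q, wj, hc', hX', hY'⟩ := henv K
    obtain ⟨s, ws, -, hcs⟩ := E.conflation_pushout hc j
    obtain ⟨t, wt, -, hct⟩ := E.conflation_pushout hc' i
    have hQ : pushout j i ∈ E.leftPerp 𝒴 := hext _ hct (hPr P hP) (h𝒳 X' hX')
    let e : pushout i j ≅ pushout j i := pushoutSymmetry i j
    refine ⟨Y', pushout j i, pushout.inr i j ≫ e.hom, e.inv ≫ s, by simp [ws], ?_, hQ, hY'⟩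
    exact E.conflation_of_iso (ShortComplex.mk _ _ ws) _
      (ShortComplex.isoMk (Iso.refl _) e (Iso.refl _) (by simp) (by simp)) hcs
  refine ⟨⟨rfl, ?_, hcov, ?_, hPr, hext, ?_⟩, ?_⟩
  · ext N
    constructor
    · intro hN X hX
      exact hX N hN
    · intro hN
      obtain ⟨Y', X', i, p, w, hc, hX', hY'⟩ := henv N
      obtain ⟨r, hr⟩ := hN X' (h𝒳 X' hX') _ _ _ _ hc
      exact hsum Y' N ⟨i, r, hr⟩ hY'
  · intro A
    obtain ⟨Y', X', i, p, w, hc, hX', hY'⟩ := henv A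
    exact ⟨Y', X', i, p, w, hc, h𝒳 X' hX', hY'⟩
  · rintro ⟨a, b, wab⟩ hS h2 h3 Y hY
    obtain ⟨I, D, i, p, w, hc, hII⟩ := hinj Y
    have hD : D ∈ 𝒴 := right_coresolving hpair (E.shortExact_of_conflation _ hc) hY (hI I hII)
    refine E.ext1Zero_of_lift hc hII (fun f => ?_)
    obtain ⟨g, hg⟩ := (h3 D hD).extend hS f
    obtain ⟨k, hk⟩ := (h2 Y hY).lift hc g
    exact ⟨a ≫ k, by rw [Category.assoc, hk, hg]⟩
  · intro A
    obtain ⟨Y, X, i, p, w, hc, hX, hY⟩ := hcov A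
    have hs := E.shortExact_of_conflation _ hc
    have : Mono i := hs.mono_f
    refine ⟨X, p, hs.epi_g, ⟨hX, fun X' hX' g => (hX' Y hY).lift hc g⟩, ?_⟩
    refine hsum Y (kernel p) ⟨hs.exact.lift (kernel.ι p) (kernel.condition p),
      kernel.lift p i w, ?_⟩ hY
    rw [← cancel_mono (kernel.ι p), Category.assoc, kernel.lift_ι, Category.id_comp]
    exact hs.exact.lift_f _ _
end

section
/- Let ℰ be an exact structure on an abelian category 𝒜 such that 𝒜 has enough ℰ-projectives and enough ℰ-injectives, and let A be an object of 𝒜. Then the following are equivalent: (1) for every ℰ-projective object P, every short exact sequence 0 → A → Z → P → 0 in 𝒜 splits; (2) every short exact sequence 0 → A → Z → V → 0 in 𝒜 is a conflation. -/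
open CategoryTheory Category Limits

universe v u

open ExactPaper CategoryTheory Limits in
/-- **Lemma 4.3**: for an object `A`, `Ext¹_𝒜(P,A)` vanishes for all `ℰ`-projective
objects `P` (i.e. every short exact sequence `0 → A → Z → P → 0` splits) if and only if
every short exact sequence `0 → A → Z → V → 0` is a conflation. -/
theorem ext_vanishing_iff_all_ses_conflations
    {𝒜 : Type u} [Category.{v} 𝒜] [Abelian 𝒜]
    (E : ExactStructure 𝒜)
    (hproj : E.EnoughProjectives) (hinj : E.EnoughInjectives)
    (A : 𝒜) :
    (∀ P : 𝒜, E.EProjective P →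
      ∀ (Z : 𝒜) (i : A ⟶ Z) (p : Z ⟶ P) (w : i ≫ p = 0),
        (ShortComplex.mk i p w).ShortExact → ∃ r : Z ⟶ A, i ≫ r = 𝟙 A) ↔
    (∀ (Z V : 𝒜) (i : A ⟶ Z) (p : Z ⟶ V) (w : i ≫ p = 0),
      (ShortComplex.mk i p w).ShortExact → E.conflation (ShortComplex.mk i p w)) := by
  constructor
  · intro h1 Z V i p w hS
    obtain ⟨K, P, j, π, wπ, hc, hP⟩ := hproj V
    have hcS := E.shortExact_of_conflation _ hc
    have : Mono i := hS.mono_f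
    have : Epi p := hS.epi_g
    have : Mono j := hcS.mono_f
    have : Epi π := hcS.epi_g
    -- the pulled back extension of `P` by `A`
    obtain ⟨l, hl1, hl2⟩ : ∃ l : A ⟶ pullback p π,
        l ≫ pullback.fst p π = i ∧ l ≫ pullback.snd p π = 0 :=
      ⟨pullback.lift i 0 (by rw [w, zero_comp]), pullback.lift_fst _ _ _, pullback.lift_snd _ _ _⟩
    have hpb : (ShortComplex.mk l (pullback.snd p π) hl2).ShortExact := by
      have hm : Mono l := by
        have : Mono (l ≫ pullback.fst p π) := by rw [hl1]; infer_instance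
        exact mono_of_mono _ (pullback.fst p π)
      have he : Epi (pullback.snd p π) := inferInstance
      refine ShortComplex.ShortExact.mk' (ShortComplex.exact_of_f_is_kernel _ ?_) hm he
      refine KernelFork.IsLimit.ofι' _ _ (fun {T} t ht => ?_)
      have ht2 : t ≫ pullback.snd p π = 0 := ht
      have ht' : (t ≫ pullback.fst p π) ≫ p = 0 := by
        rw [Category.assoc, pullback.condition, ← Category.assoc, ht2, zero_comp]
      refine ⟨hS.fIsKernel.lift (KernelFork.ofι _ ht'), ?_⟩
      have := hS.fIsKernel.fac (KernelFork.ofι _ ht') WalkingParallelPair.zero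
      apply pullback.hom_ext
      · rw [Category.assoc]
        erw [hl1]
        exact this
      · rw [Category.assoc]
        erw [hl2]
        rw [comp_zero, ht2]
    obtain ⟨r, hr⟩ := h1 P hP _ _ _ hl2 hpb
    let σ := ShortComplex.Splitting.ofExactOfRetraction _ hpb.exact r hr hpb.epi_g
    have hσ : σ.s ≫ pullback.snd p π = 𝟙 P := σ.s_g
    obtain ⟨k, hk⟩ : ∃ k : P ⟶ Z, k ≫ p = π :=
      ⟨σ.s ≫ pullback.fst p π, by
        rw [Category.assoc, pullback.condition, ← Category.assoc, hσ, Category.id_comp]⟩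
    -- the induced map on kernels
    have hjk : (j ≫ k) ≫ p = 0 := by rw [Category.assoc, hk, wπ]
    obtain ⟨a, ha⟩ : ∃ a : K ⟶ A, a ≫ i = j ≫ k :=
      ⟨hS.fIsKernel.lift (KernelFork.ofι _ hjk),
        hS.fIsKernel.fac (KernelFork.ofι _ hjk) WalkingParallelPair.zero⟩
    obtain ⟨C, q, wq, hq⟩ := E.admMono_pushout j a ⟨V, π, wπ, hc⟩
    have hqS := E.shortExact_of_conflation _ hq
    have : Epi q := hqS.epi_g
    obtain ⟨φ, hφ1, hφ2⟩ : ∃ φ : pushout j a ⟶ Z,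
        pushout.inl j a ≫ φ = k ∧ pushout.inr j a ≫ φ = i :=
      ⟨pushout.desc k i ha.symm, pushout.inl_desc _ _ _, pushout.inr_desc _ _ _⟩
    have hφ0 : pushout.inr j a ≫ (φ ≫ p) = 0 := by rw [← Category.assoc, hφ2, w]
    obtain ⟨c, hcq⟩ : ∃ c : C ⟶ V, q ≫ c = φ ≫ p :=
      ⟨hqS.gIsCokernel.desc (CokernelCofork.ofπ _ hφ0),
        hqS.gIsCokernel.fac (CokernelCofork.ofπ _ hφ0) WalkingParallelPair.one⟩
    have hd0 : j ≫ (pushout.inl j a ≫ q) = 0 := by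
      rw [← Category.assoc, pushout.condition, Category.assoc, wq, comp_zero]
    obtain ⟨d, hd⟩ : ∃ d : V ⟶ C, π ≫ d = pushout.inl j a ≫ q :=
      ⟨hcS.gIsCokernel.desc (CokernelCofork.ofπ _ hd0),
        hcS.gIsCokernel.fac (CokernelCofork.ofπ _ hd0) WalkingParallelPair.one⟩
    have hciso : IsIso c := by
      refine ⟨d, ?_, ?_⟩
      · rw [← cancel_epi q, ← Category.assoc, hcq, Category.comp_id]
        apply pushout.hom_ext
        · simp [reassoc_of% hφ1, reassoc_of% hk, hd]
        · simp [reassoc_of% hφ2, reassoc_of% w, wq]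
      · rw [← cancel_epi π, ← Category.assoc, hd, Category.assoc, hcq, Category.comp_id]
        simp [reassoc_of% hφ1, hk]
    let Φ : ShortComplex.mk _ q wq ⟶ ShortComplex.mk i p w :=
      { τ₁ := 𝟙 A, τ₂ := φ, τ₃ := c, comm₁₂ := by simp [hφ2], comm₂₃ := hcq.symm }
    have h₁ : IsIso Φ.τ₁ := inferInstanceAs (IsIso (𝟙 A))
    have h₃ : IsIso Φ.τ₃ := hciso
    have h₂ : IsIso Φ.τ₂ := ShortComplex.isIso₂_of_shortExact_of_isIso₁₃ Φ hqS hS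
    have : IsIso Φ := ShortComplex.isIso_of_isIso Φ
    exact E.conflation_of_iso _ _ (asIso Φ) hq
  · intro h2 P hP Z i p w hS
    obtain ⟨s, hs⟩ := hP _ (h2 Z P i p w hS) (𝟙 P)
    let σ := ShortComplex.Splitting.ofExactOfSection _ hS.exact s hs hS.mono_f
    exact ⟨σ.r, σ.f_r⟩
end

section
/- Let R be an associative unital ring and let ℰ be an exact structure on the category Mod R of right R-modules such that Mod R has enough ℰ-projectives and enough ℰ-injectives and ℰ contains all pure exact sequences. If 𝒳 is a class of pure projective right R-modules, then the class 𝒳^⊥ = {N : every conflation 0 → N → Z → X → 0 with X ∈ 𝒳 splits} is preenveloping: every right R-module admits an 𝒳^⊥-preenvelope. -/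
open CategoryTheory Category Limits

universe v u

namespace ExactPaper

open CategoryTheory Limits

variable {R : Type u} [Ring R]

/-- A pure exact sequence of right `R`-modules (i.e. of `Rᵐᵒᵖ`-modules): a short exact
sequence which stays exact after applying `Hom_R(F, −)` for every finitely presented
right `R`-module `F`. -/
def PureSES (S : ShortComplex (ModuleCat.{u} Rᵐᵒᵖ)) : Prop :=
  S.ShortExact ∧ ∀ F : ModuleCat.{u} Rᵐᵒᵖ, Module.FinitePresentation Rᵐᵒᵖ F →
    ∀ h : F ⟶ S.X₃, ∃ k : F ⟶ S.X₂, k ≫ S.g = h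

/-- A pure projective right `R`-module: projective with respect to pure exact sequences. -/
def PureProjective (P : ModuleCat.{u} Rᵐᵒᵖ) : Prop :=
  ∀ S : ShortComplex (ModuleCat.{u} Rᵐᵒᵖ), PureSES S →
    ∀ h : P ⟶ S.X₃, ∃ k : P ⟶ S.X₂, k ≫ S.g = h

/-- A pure injective right `R`-module: injective with respect to pure exact sequences. -/
def PureInjective (I : ModuleCat.{u} Rᵐᵒᵖ) : Prop :=
  ∀ S : ShortComplex (ModuleCat.{u} Rᵐᵒᵖ), PureSES S →
    ∀ h : S.X₁ ⟶ I, ∃ k : S.X₂ ⟶ I, S.f ≫ k = h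

end ExactPaper


namespace ExactPaper

/-- Terms: an algebraic closure of a module under solving finite linear systems. -/
inductive Tm (S A : Type u) : Type u
  | var : A → Tm S A
  | zero : Tm S A
  | add : Tm S A → Tm S A → Tm S A
  | smul : S → Tm S A → Tm S A
  | sol (m n : ℕ) (M : Fin m → Fin n → S) (j : Fin n) (c : Fin m → Tm S A) : Tm S A

open Classical in
/-- A chosen solution of a linear system (zero if it is unsolvable). -/
noncomputable def chosenSol {S Y : Type u} [Ring S] [AddCommGroup Y] [Module S Y] {m n : ℕ}
    (M : Fin m → Fin n → S) (c : Fin m → Y) : Fin n → Y :=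
  if h : ∃ x : Fin n → Y, ∀ i, ∑ j, M i j • x j = c i then h.choose else 0

theorem chosenSol_spec {S Y : Type u} [Ring S] [AddCommGroup Y] [Module S Y] {m n : ℕ}
    (M : Fin m → Fin n → S) (c : Fin m → Y)
    (h : ∃ x : Fin n → Y, ∀ i, ∑ j, M i j • x j = c i) (i : Fin m) :
    ∑ j, M i j • chosenSol M c j = c i := by
  unfold chosenSol
  rw [dif_pos h]
  exact h.choose_spec i

/-- Evaluation of terms in a module. -/
noncomputable def Tm.eval {S A Y : Type u} [Ring S] [AddCommGroup Y] [Module S Y] (g : A → Y) :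
    Tm S A → Y
  | .var a => g a
  | .zero => 0
  | .add s t => s.eval g + t.eval g
  | .smul r t => r • t.eval g
  | .sol _ _ M j c => chosenSol M (fun i => (c i).eval g) j

/-- The submodule of values of terms. -/
noncomputable def hull {S A Y : Type u} [Ring S] [AddCommGroup Y] [Module S Y] (g : A → Y) :
    Submodule S Y where
  carrier := Set.range (Tm.eval (S := S) g)
  zero_mem' := ⟨.zero, rfl⟩
  add_mem' := by
    rintro _ _ ⟨s, rfl⟩ ⟨t, rfl⟩
    exact ⟨.add s t, rfl⟩
  smul_mem' := by
    rintro r _ ⟨s, rfl⟩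
    exact ⟨.smul r s, rfl⟩

theorem hull_solves {S A Y : Type u} [Ring S] [AddCommGroup Y] [Module S Y] (g : A → Y)
    {m n : ℕ} (M : Fin m → Fin n → S) (y : Fin n → Y)
    (hc : ∀ i, ∑ j, M i j • y j ∈ hull (S := S) g) :
    ∃ x : Fin n → Y, (∀ j, x j ∈ hull (S := S) g) ∧
      ∀ i, ∑ j, M i j • x j = ∑ j, M i j • y j := by
  choose t ht using hc
  refine ⟨fun j => (Tm.sol m n M j t).eval g, fun j => ⟨_, rfl⟩, fun i => ?_⟩
  have h := chosenSol_spec M (fun i => (t i).eval g) ⟨y, fun i => (ht i).symm⟩ i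
  exact h.trans (ht i)

theorem hull_lift {S A Y F : Type u} [Ring S] [AddCommGroup Y] [Module S Y] (g : A → Y)
    [AddCommGroup F] [Module S F] [Module.FinitePresentation S F]
    (h : F →ₗ[S] Y ⧸ hull (S := S) g) :
    ∃ k : F →ₗ[S] Y, (hull (S := S) g).mkQ ∘ₗ k = h := by
  obtain ⟨n, K, e, hK⟩ := Module.FinitePresentation.exists_fin S F
  obtain ⟨m, M, hM⟩ := Submodule.fg_iff_exists_fin_generating_family.1 hK
  have hsurj := (hull (S := S) g).mkQ_surjective
  choose y hy using fun j : Fin n => hsurj (h (e.symm (K.mkQ (Pi.single j 1))))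
  have key : ∀ v : Fin n → S,
      (hull (S := S) g).mkQ (∑ j, v j • y j) = h (e.symm (K.mkQ v)) := by
    intro v
    conv_rhs => rw [pi_eq_sum_univ' v]
    simp only [map_sum, map_smul, hy]
  obtain ⟨x, hx, hxy⟩ := hull_solves g M y (by
    intro i
    rw [← Submodule.Quotient.mk_eq_zero, ← Submodule.mkQ_apply, key]
    have : K.mkQ (M i) = 0 := by
      rw [Submodule.mkQ_apply, Submodule.Quotient.mk_eq_zero, ← hM]
      exact Submodule.subset_span ⟨i, rfl⟩
    rw [this, map_zero, map_zero])
  let φ : (Fin n → S) →ₗ[S] Y :=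
    { toFun := fun v => ∑ j, v j • (y j - x j)
      map_add' := fun v w => by simp [add_smul, Finset.sum_add_distrib]
      map_smul' := fun r v => by simp [mul_smul, Finset.smul_sum] }
  have hφ : K ≤ LinearMap.ker φ := by
    rw [← hM, Submodule.span_le]
    rintro _ ⟨i, rfl⟩
    change ∑ j, M i j • (y j - x j) = 0
    simp only [smul_sub, Finset.sum_sub_distrib, hxy, sub_self]
  refine ⟨K.liftQ φ hφ ∘ₗ e.toLinearMap, ?_⟩
  ext f
  obtain ⟨v, hv⟩ := K.mkQ_surjective (e f)
  have hf : f = e.symm (K.mkQ v) := by simp [hv]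
  have hx0 : (hull (S := S) g).mkQ (∑ j, v j • x j) = 0 := by
    rw [Submodule.mkQ_apply, Submodule.Quotient.mk_eq_zero]
    exact Submodule.sum_mem _ fun j _ => Submodule.smul_mem _ _ (hx j)
  calc _ = (hull (S := S) g).mkQ (K.liftQ φ hφ (e f)) := rfl
    _ = (hull (S := S) g).mkQ (K.liftQ φ hφ (K.mkQ v)) := by rw [hv]
    _ = (hull (S := S) g).mkQ (∑ j, v j • (y j - x j)) := rfl
    _ = h f := by
      simp only [smul_sub, Finset.sum_sub_distrib]
      rw [map_sub, hx0, sub_zero, key, ← hf]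

/-- Two maps out of `A` with the same term congruence have isomorphic hulls. -/
theorem hull_map {S A Y Y' : Type u} [Ring S] [AddCommGroup Y] [Module S Y]
    [AddCommGroup Y'] [Module S Y'] (g : A → Y) (g' : A → Y')
    (h : Setoid.ker (Tm.eval (S := S) g) = Setoid.ker (Tm.eval (S := S) g')) :
    ∃ φ : hull (S := S) g →ₗ[S] Y', ∀ t : Tm S A, φ ⟨t.eval g, t, rfl⟩ = t.eval g' := by
  have hc : ∀ s t : Tm S A, s.eval g = t.eval g → s.eval g' = t.eval g' := fun s t hst => by
    have : Setoid.ker (Tm.eval (S := S) g) s t := hst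
    rw [h] at this
    exact this
  have hs : ∀ x : hull (S := S) g, ∃ t : Tm S A, t.eval g = x := fun x => x.2
  choose τ hτ using hs
  refine ⟨{ toFun := fun x => (τ x).eval g', map_add' := fun x y => ?_,
            map_smul' := fun r x => ?_ }, fun t => ?_⟩
  · exact hc (τ (x + y)) (.add (τ x) (τ y)) (by simp [Tm.eval, hτ])
  · exact hc (τ (r • x)) (.smul r (τ x)) (by simp [Tm.eval, hτ])
  · exact hc _ _ (hτ _)

/-- If `Ext¹(X,N)=0`, maps to `N` extend along conflations with cokernel `X`. -/
theorem ExactStructure.Ext1Zero.extend_s14 {𝒜 : Type u} [Category.{v} 𝒜] [Abelian 𝒜]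
    {E : ExactStructure 𝒜} {X N : 𝒜} (hN : E.Ext1Zero X N) {L Z : 𝒜} (i : L ⟶ Z) (p : Z ⟶ X)
    (w : i ≫ p = 0) (hc : E.conflation (ShortComplex.mk i p w)) (f : L ⟶ N) :
    ∃ s : Z ⟶ N, i ≫ s = f := by
  obtain ⟨C, g, wg, hg⟩ := E.admMono_pushout i f ⟨X, p, w, hc⟩
  have hse := E.shortExact_of_conflation _ hc
  have hse' := E.shortExact_of_conflation _ hg
  have : Epi p := hse.epi_g
  have : Epi g := hse'.epi_g
  let q : pushout i f ⟶ X := pushout.desc p 0 (by simp [w])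
  have hq : pushout.inr i f ≫ q = 0 := pushout.inr_desc _ _ _
  have hq' : pushout.inl i f ≫ q = p := pushout.inl_desc _ _ _
  have : Epi q := epi_of_epi_fac hq'
  let a : C ⟶ X := hse'.exact.desc q hq
  have ha : g ≫ a = q := hse'.exact.g_desc q hq
  have wb : i ≫ (pushout.inl i f ≫ g) = 0 := by
    rw [← Category.assoc, pushout.condition, Category.assoc, wg, comp_zero]
  let b : X ⟶ C := hse.exact.desc (pushout.inl i f ≫ g) wb
  have hb : p ≫ b = pushout.inl i f ≫ g := hse.exact.g_desc _ wb
  have hqb : q ≫ b = g := by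
    apply pushout.hom_ext
    · rw [← Category.assoc, hq', hb]
    · rw [← Category.assoc, hq, zero_comp, wg]
  let e : C ≅ X :=
    { hom := a
      inv := b
      hom_inv_id := by rw [← cancel_epi g, ← Category.assoc, ha, hqb, Category.comp_id]
      inv_hom_id := by rw [← cancel_epi q, ← Category.assoc, hqb, ha, Category.comp_id] }
  have hc' : E.conflation (ShortComplex.mk (pushout.inr i f) q hq) := by
    refine E.conflation_of_iso _ _ (ShortComplex.isoMk (S₁ := ShortComplex.mk _ g wg)
      (S₂ := ShortComplex.mk _ q hq) (Iso.refl _) (Iso.refl _) e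
      ?_ ?_) hg
    · simp
    · simp [e, ha]
  obtain ⟨r, hr⟩ := hN _ _ _ _ hc'
  refine ⟨pushout.inl i f ≫ r, ?_⟩
  rw [← Category.assoc, pushout.condition, Category.assoc, hr, Category.comp_id]

/-- Hulls of objects of the orthogonal class lie in the orthogonal class. -/
theorem hull_ext1Zero {R : Type u} [Ring R] (E : ExactStructure (ModuleCat.{u} Rᵐᵒᵖ))
    {X Y : ModuleCat.{u} Rᵐᵒᵖ} (hX : PureProjective X) (hY : E.Ext1Zero X Y)
    {A : Type u} (g : A → Y) : E.Ext1Zero X (ModuleCat.of Rᵐᵒᵖ (hull (S := Rᵐᵒᵖ) g)) := by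
  intro Z i p w hc
  let H := hull (S := Rᵐᵒᵖ) g
  let u : ModuleCat.of Rᵐᵒᵖ H ⟶ Y := ModuleCat.ofHom H.subtype
  let q : Y ⟶ ModuleCat.of Rᵐᵒᵖ (Y ⧸ H) := ModuleCat.ofHom H.mkQ
  have huq : u ≫ q = 0 := by
    ext x
    exact (Submodule.Quotient.mk_eq_zero H).2 x.2
  have hmono : Mono u := (ModuleCat.mono_iff_injective u).2 H.injective_subtype
  have hepi : Epi q := (ModuleCat.epi_iff_surjective q).2 H.mkQ_surjective
  have hex : (ShortComplex.mk u q huq).Exact := by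
    rw [ShortComplex.moduleCat_exact_iff]
    intro y hy
    exact ⟨⟨y, (Submodule.Quotient.mk_eq_zero H).1 hy⟩, rfl⟩
  have hse : (ShortComplex.mk u q huq).ShortExact := ⟨hex⟩
  have hp : PureSES (ShortComplex.mk u q huq) := by
    refine ⟨hse, fun F hF h => ?_⟩
    obtain ⟨k, hk⟩ := hull_lift g h.hom
    exact ⟨ModuleCat.ofHom k, ModuleCat.hom_ext hk⟩
  obtain ⟨s, hs⟩ := hY.extend_s14 i p w hc u
  have hse0 := E.shortExact_of_conflation _ hc
  have : Epi p := hse0.epi_g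
  have hsq : i ≫ (s ≫ q) = 0 := by rw [← Category.assoc, hs, huq]
  obtain ⟨t, ht⟩ := hX _ hp (hse0.exact.desc (s ≫ q) hsq)
  have ht' : p ≫ t ≫ q = s ≫ q := by
    have h1 : p ≫ hse0.exact.desc (s ≫ q) hsq = s ≫ q := hse0.exact.g_desc _ _
    rw [← h1, ← ht]
  have hz : (s - p ≫ t) ≫ q = 0 := by
    rw [Preadditive.sub_comp, Category.assoc, ht', sub_self]
  refine ⟨hex.lift (s - p ≫ t) hz, ?_⟩
  have h2 : hex.lift (s - p ≫ t) hz ≫ u = s - p ≫ t := hex.lift_f _ _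
  rw [← cancel_mono u, Category.assoc, h2, Preadditive.comp_sub, hs, ← Category.assoc, w,
    zero_comp, sub_zero, Category.id_comp]

/-- Orthogonal classes are closed under products. -/
theorem pi_ext1Zero {S : Type u} [Ring S] (E : ExactStructure (ModuleCat.{u} S))
    {X : ModuleCat.{u} S} {I : Type u} (N : I → ModuleCat.{u} S) (hN : ∀ i, E.Ext1Zero X (N i)) :
    E.Ext1Zero X (ModuleCat.of S (∀ i, N i)) := by
  intro Z f p w hc
  choose s hs using fun j : I => (hN j).extend_s14 f p w hc (ModuleCat.ofHom (LinearMap.proj j))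
  refine ⟨ModuleCat.ofHom (LinearMap.pi fun j => (s j).hom), ?_⟩
  ext x j
  exact congrArg (fun k => k.hom x) (hs j)

end ExactPaper

open ExactPaper CategoryTheory Limits in
/-- **Theorem 4.4(1), first part**: let `ℰ` be an exact structure on `Mod R` with enough
`ℰ`-projectives and `ℰ`-injectives containing all pure exact sequences. If `𝒳` is a class
of pure projective right `R`-modules, then `𝒳^⊥` is preenveloping. -/
theorem rightPerp_preenveloping_of_pureProjective
    {R : Type u} [Ring R]
    (E : ExactStructure (ModuleCat.{u} Rᵐᵒᵖ))
    (hproj : E.EnoughProjectives) (hinj : E.EnoughInjectives)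
    (hpure : ∀ S : ShortComplex (ModuleCat.{u} Rᵐᵒᵖ), PureSES S → E.conflation S)
    (𝒳 : Set (ModuleCat.{u} Rᵐᵒᵖ)) (h𝒳 : ∀ X ∈ 𝒳, PureProjective X) :
    ∀ A : ModuleCat.{u} Rᵐᵒᵖ, ∃ (Y : ModuleCat.{u} Rᵐᵒᵖ) (j : A ⟶ Y),
      IsPreenvelope (E.rightPerp 𝒳) j := by
  intro A
  let T := Tm Rᵐᵒᵖ A
  let I : Type u := {s : Setoid T // ∃ (Y : ModuleCat.{u} Rᵐᵒᵖ) (g : A ⟶ Y),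
    Y ∈ E.rightPerp 𝒳 ∧ Setoid.ker (Tm.eval (S := Rᵐᵒᵖ) g.hom) = s}
  choose Y g hY hg using fun i : I => i.2
  let N : I → ModuleCat.{u} Rᵐᵒᵖ :=
    fun i => ModuleCat.of Rᵐᵒᵖ (hull (S := Rᵐᵒᵖ) (g i).hom)
  let c : ∀ i, A →ₗ[Rᵐᵒᵖ] N i := fun i =>
    LinearMap.codRestrict (hull (S := Rᵐᵒᵖ) (g i).hom) (g i).hom (fun a => ⟨Tm.var a, rfl⟩)
  refine ⟨ModuleCat.of Rᵐᵒᵖ (∀ i, N i), ModuleCat.ofHom (LinearMap.pi c), ?_, ?_⟩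
  · intro X hX
    exact pi_ext1Zero E N fun i => hull_ext1Zero E (h𝒳 X hX) (hY i X hX) _
  · intro Y' hY' g'
    let i : I := ⟨Setoid.ker (Tm.eval (S := Rᵐᵒᵖ) g'.hom), Y', g', hY', rfl⟩
    obtain ⟨φ, hφ⟩ := hull_map (S := Rᵐᵒᵖ) (g i).hom g'.hom (hg i)
    refine ⟨ModuleCat.ofHom (φ ∘ₗ LinearMap.proj i), ?_⟩
    ext a
    exact hφ (Tm.var a)
end

section
/- Let R be an associative unital ring and let ℰ be an exact structure on the category Mod R of right R-modules such that Mod R has enough ℰ-projectives and enough ℰ-injectives and ℰ contains all pure exact sequences. Let 𝒳 be a class of pure projective right R-modules such that each X ∈ 𝒳 admits an exact sequence C₂ → C₁ → C₀ → X → 0 in which each Cᵢ is finitely presented and ℰ-projective and each induced short exact sequence 0 → Ω_{i+1} → Cᵢ → Ωᵢ → 0 (with Ω₀ = X and Ωᵢ the image of Cᵢ → C_{i−1}) is a conflation. Then the class 𝒳^⊥ = {N : every conflation 0 → N → Z → X → 0 with X ∈ 𝒳 splits} is covering: every right R-module admits an 𝒳^⊥-cover. -/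
open CategoryTheory Category Limits

universe v u

namespace CoverProof

section Algebra

variable {R : Type u} [Ring R]

/-- Purity of a submodule, in terms of finite systems of linear equations. -/
def IsPureSub {M : Type*} [AddCommGroup M] [Module R M] (P : Submodule R M) : Prop :=
  ∀ (n : ℕ) (K : Submodule R (Fin n → R)), K.FG → ∀ y : (Fin n → R) →ₗ[R] M,
    (∀ v ∈ K, y v ∈ P) →
      ∃ y' : (Fin n → R) →ₗ[R] M, (∀ v, y' v ∈ P) ∧ ∀ v ∈ K, y' v = y v

variable (R) in
/-- A morphism from a finitely presented module to a finitely presented module. -/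
structure FPArrow where
  Ω : ModuleCat.{u} R
  C : ModuleCat.{u} R
  k : Ω →ₗ[R] C
  hΩ : Module.FinitePresentation R Ω
  hC : Module.FinitePresentation R C

/-- The class of modules injective with respect to a class of arrows. -/
def InY (𝓚 : Set (FPArrow R)) (M : Type*) [AddCommGroup M] [Module R M] : Prop :=
  ∀ a ∈ 𝓚, ∀ g : a.Ω →ₗ[R] M, ∃ h : a.C →ₗ[R] M, h ∘ₗ a.k = g

lemma fp_pres (M : Type*) [AddCommGroup M] [Module R M] [h : Module.FinitePresentation R M] :
    ∃ (n : ℕ) (π : (Fin n → R) →ₗ[R] M), Function.Surjective π ∧ (LinearMap.ker π).FG := by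
  obtain ⟨n, K, e, hK⟩ := Module.FinitePresentation.exists_fin R M
  refine ⟨n, e.symm.toLinearMap ∘ₗ K.mkQ, ?_, ?_⟩
  · exact e.symm.surjective.comp K.mkQ_surjective
  · rw [LinearEquiv.ker_comp, Submodule.ker_mkQ]; exact hK

/-- factor a map through a surjection -/
lemma factor_surj {A B M : Type*} [AddCommGroup A] [Module R A] [AddCommGroup B] [Module R B]
    [AddCommGroup M] [Module R M] (π : A →ₗ[R] B) (hπ : Function.Surjective π)
    (f : A →ₗ[R] M) (hf : ∀ a, π a = 0 → f a = 0) : ∃ g : B →ₗ[R] M, ∀ a, g (π a) = f a := by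
  refine ⟨(LinearMap.ker π).liftQ f (fun a ha => hf a ha) ∘ₗ
    (π.quotKerEquivOfSurjective hπ).symm.toLinearMap, fun a => ?_⟩
  have : (π.quotKerEquivOfSurjective hπ).symm (π a) = (LinearMap.ker π).mkQ a := by
    rw [LinearEquiv.symm_apply_eq]; rfl
  simp only [LinearMap.comp_apply, LinearEquiv.coe_coe, this]
  rfl

lemma InY.pure_sub {𝓚 : Set (FPArrow R)} {M : Type*} [AddCommGroup M] [Module R M]
    (hM : InY 𝓚 M) {P : Submodule R M} (hP : IsPureSub P) : InY 𝓚 P := by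
  intro a ha g
  obtain ⟨h, hh⟩ := hM a ha (P.subtype ∘ₗ g)
  have := a.hΩ
  have := a.hC
  obtain ⟨n, π, hπ, hker⟩ := fp_pres (R := R) a.C
  set K := (LinearMap.range a.k).comap π with hK
  have hKfg : K.FG := by
    apply Submodule.fg_of_fg_map_of_fg_inf_ker π
    · rw [hK, Submodule.map_comap_eq_of_surjective hπ]
      exact Module.Finite.iff_fg.mp (Module.Finite.range a.k)
    · have : K ⊓ LinearMap.ker π = LinearMap.ker π := by
        apply inf_eq_right.mpr
        intro v hv
        simp only [hK, Submodule.mem_comap, LinearMap.mem_ker.mp hv]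
        exact zero_mem _
      rwa [this]
  have key : ∀ v w, π v = a.k w → h (π v) = g w := by
    intro v w hv
    rw [hv]
    exact congrArg (fun f => f w) hh
  obtain ⟨y', hy', hy''⟩ := hP n K hKfg (h ∘ₗ π) (by
    rintro v ⟨w, hw⟩
    rw [LinearMap.comp_apply, key v w hw.symm]
    exact (g w).2)
  obtain ⟨h', hh'⟩ := factor_surj π hπ (LinearMap.codRestrict P y' hy') (by
    intro v hv
    ext
    rw [LinearMap.codRestrict_apply, hy'' v (by rw [hK, Submodule.mem_comap, hv]; exact zero_mem _)]
    simp [hv])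
  refine ⟨h', ?_⟩
  ext w
  obtain ⟨v, hv⟩ := hπ (a.k w)
  rw [LinearMap.comp_apply, ← hv, hh', LinearMap.codRestrict_apply,
    hy'' v (by rw [hK, Submodule.mem_comap, hv]; exact ⟨w, rfl⟩), LinearMap.comp_apply, key v w hv]

lemma InY.pure_quot {𝓚 : Set (FPArrow R)} {M : Type*} [AddCommGroup M] [Module R M]
    (hM : InY 𝓚 M) {P : Submodule R M} (hP : IsPureSub P) : InY 𝓚 (M ⧸ P) := by
  intro a ha g
  have := a.hΩ
  obtain ⟨n, π, hπ, hker⟩ := fp_pres (R := R) a.Ω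
  obtain ⟨y, hy⟩ := Module.projective_lifting_property P.mkQ (g ∘ₗ π) P.mkQ_surjective
  have hy (v) : P.mkQ (y v) = g (π v) := congrArg (fun f => f v) hy
  obtain ⟨y', hy', hy''⟩ := hP n _ hker y (by
    intro v hv
    rw [← Submodule.Quotient.mk_eq_zero, ← Submodule.mkQ_apply, hy, LinearMap.mem_ker.mp hv,
      map_zero])
  obtain ⟨g', hg'⟩ := factor_surj π hπ (y - y') (by
    intro v hv
    simp [hy'' v hv])
  obtain ⟨h, hh⟩ := hM a ha g'
  refine ⟨P.mkQ ∘ₗ h, ?_⟩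
  rw [LinearMap.comp_assoc, hh]
  ext w
  obtain ⟨v, rfl⟩ := hπ w
  rw [LinearMap.comp_apply, hg', LinearMap.sub_apply, map_sub, hy, sub_eq_self]
  simpa using hy' v

lemma InY.of_equiv {𝓚 : Set (FPArrow R)} {M N : Type*} [AddCommGroup M] [Module R M]
    [AddCommGroup N] [Module R N] (e : M ≃ₗ[R] N)
    (hM : InY 𝓚 M) : InY 𝓚 N := by
  intro a ha g
  obtain ⟨h, hh⟩ := hM a ha (e.symm.toLinearMap ∘ₗ g)
  refine ⟨e.toLinearMap ∘ₗ h, ?_⟩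
  rw [LinearMap.comp_assoc, hh]
  ext w
  simp

lemma InY.prod {𝓚 : Set (FPArrow R)} {M N : Type*} [AddCommGroup M] [Module R M]
    [AddCommGroup N] [Module R N] 
    (hM : InY 𝓚 M) (hN : InY 𝓚 N) : InY 𝓚 (M × N) := by
  intro a ha g
  obtain ⟨h, hh⟩ := hM a ha (LinearMap.fst R M N ∘ₗ g)
  obtain ⟨h', hh'⟩ := hN a ha (LinearMap.snd R M N ∘ₗ g)
  refine ⟨h.prod h', ?_⟩
  ext w
  · exact congrArg (fun f => f w) hh
  · exact congrArg (fun f => f w) hh'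

lemma InY.punit {𝓚 : Set (FPArrow R)} : InY 𝓚 PUnit.{u+1} := by
  intro a ha g
  exact ⟨0, Subsingleton.elim _ _⟩

/-- A map from a f.g. module to a direct sum has finite support. -/
lemma finite_support {Q : Type*} {S : Q → Type*} [∀ q, AddCommGroup (S q)] [∀ q, Module R (S q)]
    {F : Type*} [AddCommGroup F] [Module R F] [Module.Finite R F] (g : F →ₗ[R] Π₀ q, S q) :
    ∃ T : Finset Q, ∀ v, ∀ q ∉ T, g v q = 0 := by
  classical
  obtain ⟨s, hs⟩ := Module.Finite.fg_top (R := R) (M := F)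
  refine ⟨s.biUnion fun x => (g x).support, fun v q hq => ?_⟩
  have hv : v ∈ Submodule.span R (s : Set F) := hs ▸ Submodule.mem_top
  induction hv using Submodule.span_induction with
  | mem x hx =>
    by_contra h
    exact hq (Finset.mem_biUnion.mpr ⟨x, hx, by simpa using h⟩)
  | zero => simp
  | add x y _ _ hx hy => simp [hx, hy]
  | smul r x _ hx => simp [hx]

lemma InY.dfinsupp {𝓚 : Set (FPArrow R)} {Q : Type*} {S : Q → Type*} [∀ q, AddCommGroup (S q)]
    [∀ q, Module R (S q)] (hS : ∀ q, InY 𝓚 (S q)) : InY 𝓚 (Π₀ q, S q) := by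
  classical
  intro a ha g
  have := a.hΩ
  obtain ⟨T, hT⟩ := finite_support g
  choose h hh using fun q => hS q a ha (DFinsupp.lapply q ∘ₗ g)
  refine ⟨∑ q ∈ T, DFinsupp.lsingle q ∘ₗ h q, ?_⟩
  refine LinearMap.ext fun w => DFinsupp.ext fun q => ?_
  have hq : h q (a.k w) = g w q := congrArg (fun f => f w) (hh q)
  simp only [LinearMap.comp_apply, LinearMap.sum_apply, DFinsupp.lsingle_apply,
    DFinsupp.finsetSum_apply, DFinsupp.single_apply]
  rw [Finset.sum_eq_single q]
  · simpa using hq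
  · intro b _ hb; simp [hb]
  · intro hqT; simp [hq, hT w q hqT]

/-- The relation submodule in the small object step is pure. -/
lemma pure_range {Q : Type*} {S : Q → Type*} [∀ q, AddCommGroup (S q)]
    [∀ q, Module R (S q)] (S' : ∀ q, Submodule R (S q)) (hS : ∀ q, IsPureSub (S' q))
    {X : Type*} [AddCommGroup X] [Module R X] 
    (ν : (Π₀ q, S' q) →ₗ[R] (X × Π₀ q, S q)) (hν : ∀ w q, (ν w).2 q = w q) :
    IsPureSub (LinearMap.range ν) := by
  classical
  intro n K hK y hy
  obtain ⟨T, hT⟩ := finite_support (LinearMap.snd R _ _ ∘ₗ y)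
  have hy2 (q) : ∀ v ∈ K, (DFinsupp.lapply q ∘ₗ LinearMap.snd R _ _ ∘ₗ y) v ∈ S' q := by
    intro v hv
    obtain ⟨w, hw⟩ := hy v hv
    simp only [LinearMap.comp_apply, DFinsupp.lapply_apply, LinearMap.snd_apply, ← hw, hν]
    exact (w q).2
  choose z hz hz' using fun q => hS q n K hK _ (hy2 q)
  let z' (q) := LinearMap.codRestrict (S' q) (z q) (hz q)
  let Z : (Fin n → R) →ₗ[R] (Π₀ q, S' q) := ∑ q ∈ T, DFinsupp.lsingle q ∘ₗ z' q
  refine ⟨ν ∘ₗ Z, fun v => ⟨_, rfl⟩, fun v hv => ?_⟩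
  obtain ⟨w, hw⟩ := hy v hv
  rw [← hw, LinearMap.comp_apply]
  congr 1
  refine DFinsupp.ext fun q => ?_
  have e1 : (w q : S q) = z q v := by
    rw [hz' q v hv]
    simp only [LinearMap.comp_apply, DFinsupp.lapply_apply, LinearMap.snd_apply, ← hw, hν]
  simp only [Z, LinearMap.comp_apply, LinearMap.sum_apply, DFinsupp.lsingle_apply,
    DFinsupp.finsetSum_apply, DFinsupp.single_apply]
  rw [Finset.sum_eq_single q]
  · ext; simp [e1, z']
  · intro b _ hb; simp [hb]
  · intro hqT
    have := hT v q hqT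
    simp only [LinearMap.comp_apply, LinearMap.snd_apply, ← hw, hν] at this
    ext
    simp [this, z', ← e1]

/-- Union of a chain of pure submodules. -/
lemma pure_sSup {M : Type*} [AddCommGroup M] [Module R M] (c : Set (Submodule R M))
    (hc : DirectedOn (· ≤ ·) c) (hne : c.Nonempty) (h : ∀ P ∈ c, IsPureSub P) :
    IsPureSub (sSup c) := by
  intro n K hK y hy
  have h1 : K.map y ≤ sSup c := by
    rintro _ ⟨v, hv, rfl⟩; exact hy v hv
  have h2 := (Submodule.fg_iff_compact _).mp (hK.map y)
  obtain ⟨P, hP, hPK⟩ := (CompleteLattice.isCompactElement_iff_le_of_directed_sSup_le _ _).mp h2 c hne hc h1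
  obtain ⟨y', hy', hy''⟩ := h P hP n K hK y (fun v hv => hPK ⟨v, hv, rfl⟩)
  exact ⟨y', fun v => le_sSup hP (hy' v), hy''⟩

end Algebra

end CoverProof

namespace CoverProof

section LS

open Cardinal

variable (R : Type u) [Ring R]

/-- Function symbols: module operations and extra operations. -/
inductive OpFun (Op : Type u) (ar : Op → ℕ) : ℕ → Type u
  | zero : OpFun Op ar 0
  | add : OpFun Op ar 2
  | smul (r : R) : OpFun Op ar 1
  | ex (o : Op) : OpFun Op ar (ar o)

/-- The corresponding language. -/
def opLang (Op : Type u) (ar : Op → ℕ) : FirstOrder.Language.{u, 0} where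
  Functions := OpFun R Op ar
  Relations := fun _ => Empty

/-- The interpretation. -/
@[reducible] def opStr (Op : Type u) (ar : Op → ℕ) (M : Type u) [AddCommGroup M] [Module R M]
    (f : ∀ o, (Fin (ar o) → M) → M) : (opLang R Op ar).Structure M where
  funMap := fun {_} s => match s with
    | .zero => fun _ => 0
    | .add => fun x => x 0 + x 1
    | .smul r => fun x => r • x 0
    | .ex o => f o
  RelMap := fun r => r.elim

lemma exists_closed_submodule (Op : Type u) (ar : Op → ℕ) :
    ∃ lam : Cardinal.{u}, ∀ (M : Type u) [AddCommGroup M] [Module R M]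
      (f : ∀ o, (Fin (ar o) → M) → M) (y : M),
      ∃ S : Submodule R M, y ∈ S ∧ #S ≤ lam ∧ ∀ o s, (∀ i, s i ∈ S) → f o s ∈ S := by
  refine ⟨max ℵ₀ (1 + #(Σ i, (opLang R Op ar).Functions i)), fun M _ _ f y => ?_⟩
  let _ := opStr R Op ar M f
  let C := FirstOrder.Language.Substructure.closure (opLang R Op ar) ({y} : Set M)
  have hcl {n : ℕ} (g : OpFun R Op ar n) := C.fun_mem (n := n) g
  let S : Submodule R M :=
    { carrier := C
      add_mem' := by
        intro a b ha hb
        have := hcl .add ![a, b] (by intro i; fin_cases i <;> assumption)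
        exact this
      zero_mem' := by
        have := hcl .zero ![] (by intro i; exact i.elim0)
        exact this
      smul_mem' := by
        intro r a ha
        have := hcl (.smul r) ![a] (by intro i; fin_cases i; assumption)
        exact this }
  refine ⟨S, ?_, ?_, ?_⟩
  · exact FirstOrder.Language.Substructure.subset_closure (Set.mem_singleton y)
  · have := FirstOrder.Language.Substructure.lift_card_closure_le (L := opLang R Op ar)
      (s := ({y} : Set M))
    rw [lift_id, lift_id, lift_id, mk_singleton] at this
    exact this
  · intro o s hs
    exact hcl (.ex o) s hs

variable {R}

/-- Loewenheim-Skolem for purity. -/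
lemma exists_small_pure : ∃ lam : Cardinal.{u}, ∀ (M : Type u) [AddCommGroup M] [Module R M]
    (P : Submodule R M), IsPureSub P → ∀ y : M,
    ∃ S : Submodule R M, y ∈ S ∧ #S ≤ lam ∧ IsPureSub S ∧ IsPureSub (S ⊓ P) ∧
      IsPureSub (S ⊔ P) := by
  classical
  let KK := Σ n : ℕ, {K : Submodule R (Fin n → R) // K.FG}
  have hgen (K : KK) : ∃ (m : ℕ) (e : Fin m → (Fin K.1 → R)),
      Submodule.span R (Set.range e) = K.2.1 := Submodule.fg_iff_exists_fin_generating_family.mp K.2.2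
  choose m e he using hgen
  let Op : Type u := Σ K : KK, Fin 3 × Fin K.1
  obtain ⟨lam, hlam⟩ := exists_closed_submodule R Op (fun o => m o.1)
  refine ⟨lam, fun M _ _ P hP y0 => ?_⟩
  let Φ (K : KK) (t : Fin 3) (s : Fin (m K) → M) (y : (Fin K.1 → R) →ₗ[R] M) : Prop :=
    (t = 0 ∧ ∀ i, y (e K i) = s i) ∨
    (t = 1 ∧ (∀ i, y (e K i) = s i) ∧ ∀ v, y v ∈ P) ∨
    (t = 2 ∧ ∀ i, y (e K i) - s i ∈ P)
  have hch : ∀ K t s, ∃ y, (∃ y, Φ K t s y) → Φ K t s y := by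
    intro K t s
    by_cases h : ∃ y, Φ K t s y
    · exact ⟨h.choose, fun _ => h.choose_spec⟩
    · exact ⟨0, fun h' => absurd h' h⟩
  choose sol hsol using hch
  obtain ⟨S, hyS, hcard, hS⟩ := hlam M (fun o s => sol o.1 o.2.1 s (Pi.single o.2.2 1)) y0
  have key : ∀ K t s, (∀ i, s i ∈ S) → (∃ y, Φ K t s y) → ∃ y, Φ K t s y ∧ ∀ v, y v ∈ S := by
    intro K t s hs hex
    refine ⟨sol K t s, hsol K t s hex, fun v => ?_⟩
    have : v = ∑ j, v j • (Pi.single j 1 : Fin K.1 → R) := by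
      ext i; simp [Finset.sum_apply, Pi.single_apply]
    rw [this, map_sum]
    refine Submodule.sum_mem _ fun j _ => ?_
    rw [map_smul]
    exact S.smul_mem _ (hS ⟨K, t, j⟩ s hs)
  have heK (K : KK) (i) : e K i ∈ K.2.1 := by
    rw [← he K]; exact Submodule.subset_span ⟨i, rfl⟩
  have hext (K : KK) (y y' : (Fin K.1 → R) →ₗ[R] M) (h : ∀ i, y' (e K i) = y (e K i)) :
      ∀ v ∈ K.2.1, y' v = y v := by
    intro v hv
    rw [← he K] at hv
    exact LinearMap.eqOn_span (f := y') (g := y) (by rintro _ ⟨i, rfl⟩; exact h i) hv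
  refine ⟨S, hyS, hcard, ?_, ?_, ?_⟩
  · intro n K hK y hy
    let K' : KK := ⟨n, K, hK⟩
    obtain ⟨y', hΦ, hy'⟩ := key K' 0 (fun i => y (e K' i)) (fun i => hy _ (heK K' i))
      ⟨y, Or.inl ⟨rfl, fun i => rfl⟩⟩
    have hΦ : ∀ i, y' (e K' i) = y (e K' i) := by simpa [Φ] using hΦ
    exact ⟨y', hy', hext K' y y' hΦ⟩
  · intro n K hK y hy
    let K' : KK := ⟨n, K, hK⟩
    obtain ⟨y1, hy1, hy1'⟩ := hP n K hK y (fun v hv => (hy v hv).2)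
    obtain ⟨y', hΦ, hy'⟩ := key K' 1 (fun i => y (e K' i)) (fun i => (hy _ (heK K' i)).1)
      ⟨y1, Or.inr (Or.inl ⟨rfl, fun i => hy1' _ (heK K' i), hy1⟩)⟩
    have hΦ : (∀ i, y' (e K' i) = y (e K' i)) ∧ ∀ v, y' v ∈ P := by simpa [Φ] using hΦ
    exact ⟨y', fun v => ⟨hy' v, hΦ.2 v⟩, hext K' y y' hΦ.1⟩
  · intro n K hK y hy
    let K' : KK := ⟨n, K, hK⟩
    have : ∀ i, ∃ s ∈ S, ∃ p ∈ P, s + p = y (e K' i) :=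
      fun i => Submodule.mem_sup.mp (hy _ (heK K' i))
    choose s hs p hp hsp using this
    have hys (i) : y (e K' i) - s i ∈ P := by
      rw [← hsp i, add_sub_cancel_left]; exact hp i
    obtain ⟨y1, hΦ, hy1⟩ := key K' 2 s hs ⟨y, Or.inr (Or.inr ⟨rfl, hys⟩)⟩
    have hΦ : ∀ i, y1 (e K' i) - s i ∈ P := by simpa [Φ] using hΦ
    obtain ⟨z, hz, hz'⟩ := hP n K hK (y - y1) (by
      have : K ≤ P.comap (y - y1) := by
        change K'.2.1 ≤ _
        rw [← he K', Submodule.span_le]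
        rintro _ ⟨i, rfl⟩
        simp only [Submodule.comap_coe, Set.mem_preimage, SetLike.mem_coe, LinearMap.sub_apply]
        have := P.sub_mem (hys i) (hΦ i)
        simpa using this
      exact fun v hv => this hv)
    refine ⟨y1 + z, fun v => Submodule.add_mem_sup (hy1 v) (hz v), fun v hv => ?_⟩
    simp [hz' v hv]

end LS

end CoverProof

namespace CoverProof

section Chain

/-- Transfinite chains built from a one-step extension property. -/
lemma exists_chain {C : Type*} [Category C] (J : Type u) [LinearOrder J] [OrderBot J]
    [SuccOrder J] [WellFoundedLT J] [NoMaxOrder J] [HasIterationOfShape J C]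
    (Good : C → Prop) (Step : Arrow C → Prop) (X₀ : C) (h₀ : Good X₀)
    (hstep : ∀ X, Good X → ∃ (Y : C) (f : X ⟶ Y), Good Y ∧ Step (Arrow.mk f))
    (hlim : ∀ (J' : Type u) [LinearOrder J'] [Nonempty J'] (F : J' ⥤ C) (c : Cocone F),
      IsColimit c → (∀ i, Good (F.obj i)) → Good c.pt) :
    ∃ F : J ⥤ C, F.IsWellOrderContinuous ∧ (∀ j, Good (F.obj j)) ∧
      ∀ j, Step (Arrow.mk (F.map (homOfLE (Order.le_succ j)))) := by
  classical
  have : ∀ X, ∃ (Y : C) (f : X ⟶ Y), Good X → Good Y ∧ Step (Arrow.mk f) := by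
    intro X
    by_cases h : Good X
    · obtain ⟨Y, f, hf⟩ := hstep X h
      exact ⟨Y, f, fun _ => hf⟩
    · exact ⟨X, 𝟙 X, fun h' => absurd h' h⟩
  choose sc toSc hsc using this
  let Φ : SmallObject.SuccStruct C := ⟨X₀, sc, toSc⟩
  have hs (j : J) := (Φ.prop_iff _).mp
    (Φ.prop_iterationFunctor_map_succ j (not_isMax j))
  have hgood : ∀ j, Good ((Φ.iterationFunctor J).obj j) := by
    intro j
    induction j using SuccOrder.limitRecOn with
    | isMin j hj =>
      obtain rfl := hj.eq_bot
      have : (Φ.iterationFunctor J).obj ⊥ = X₀ := (Φ.iter ⊥).obj_bot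
      rw [this]; exact h₀
    | succ j hj ih =>
      have h1 : (Φ.iterationFunctor J).obj (Order.succ j) = sc ((Φ.iterationFunctor J).obj j) :=
        congrArg (fun a : Arrow C => a.right) (hs j)
      rw [h1]
      exact (hsc _ ih).1
    | isSuccLimit j hj ih =>
      have hne : Nonempty (Set.Iio j) := by
        obtain ⟨b, hb⟩ := not_isMin_iff.mp hj.1
        exact ⟨⟨b, hb⟩⟩
      exact hlim _ _ _ ((Φ.iterationFunctor J).isColimitOfIsWellOrderContinuous j hj)
        (fun i => ih i.1 i.2)
  refine ⟨Φ.iterationFunctor J, inferInstance, hgood, fun j => ?_⟩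
  rw [hs j]
  exact (hsc _ (hgood j)).2

variable {R : Type u} [Ring R] {A : ModuleCat.{u} R}

lemma colim_surj {J : Type u} [LinearOrder J] [Nonempty J] {K : J ⥤ Over A} {c : Cocone K}
    (hc : IsColimit c) (x : c.pt.left) : ∃ (j : J) (y : (K.obj j).left),
      (c.ι.app j).left.hom y = x :=
  Concrete.isColimit_exists_rep _ (isColimitOfPreserves (Over.forget A) hc) x

lemma colim_eq_zero {J : Type u} [LinearOrder J] [Nonempty J] {K : J ⥤ Over A} {c : Cocone K}
    (hc : IsColimit c) (i : J) (x : (K.obj i).left) (hx : (c.ι.app i).left.hom x = 0) :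
    ∃ (j : J) (h : i ≤ j), (K.map (homOfLE h)).left.hom x = 0 := by
  obtain ⟨j, f, g, h⟩ := Concrete.isColimit_exists_of_rep_eq (K ⋙ Over.forget A)
    (isColimitOfPreserves (Over.forget A) hc) x (0 : (K.obj i).left) (by
      refine Eq.trans hx (Eq.symm ?_)
      exact map_zero (c.ι.app i).left.hom)
  refine ⟨j, leOfHom f, ?_⟩
  refine Eq.trans h ?_
  exact map_zero (K.map g).left.hom

lemma over_map_map {J : Type u} [LinearOrder J] (K : J ⥤ Over A) {i j k : J} (h : i ≤ j)
    (h' : j ≤ k) (x : (K.obj i).left) : (K.map (homOfLE h')).left.hom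
      ((K.map (homOfLE h)).left.hom x) = (K.map (homOfLE (h.trans h'))).left.hom x := by
  rw [← homOfLE_comp h h', K.map_comp]
  rfl

lemma over_map_ι {J : Type u} [LinearOrder J] {K : J ⥤ Over A} (c : Cocone K) {i j : J} (h : i ≤ j)
    (x : (K.obj i).left) : (c.ι.app j).left.hom
      ((K.map (homOfLE h)).left.hom x) = (c.ι.app i).left.hom x := by
  rw [← c.w (homOfLE h)]
  rfl

lemma over_hom_hom {X Y : Over A} (f : X ⟶ Y) (x : X.left) : Y.hom.hom (f.left.hom x) = X.hom.hom x := by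
  rw [← Over.w f]
  rfl

lemma fin_bound {J : Type u} [LinearOrder J] [Nonempty J] {ι : Type*} [Finite ι] (f : ι → J) :
    ∃ j, ∀ i, f i ≤ j := Finite.exists_le f

lemma InY.colim {𝓚 : Set (FPArrow R)} {J : Type u} [LinearOrder J] [Nonempty J] {K : J ⥤ Over A}
    {c : Cocone K} (hc : IsColimit c) (h : ∀ j, InY 𝓚 (K.obj j).left) : InY 𝓚 c.pt.left := by
  intro a ha g
  have := a.hΩ
  obtain ⟨n, π, hπ, hker⟩ := fp_pres (R := R) a.Ω
  choose j y hy using fun i : Fin n => colim_surj hc (g (π (Pi.single i 1)))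
  obtain ⟨j₁, hj₁⟩ := fin_bound j
  let y₁ : (Fin n → R) →ₗ[R] (K.obj j₁).left :=
    (Pi.basisFun R (Fin n)).constr ℕ (fun i => (K.map (homOfLE (hj₁ i))).left.hom (y i))
  have hy₁ : (c.ι.app j₁).left.hom ∘ₗ y₁ = g ∘ₗ π := by
    refine (Pi.basisFun R (Fin n)).ext fun i => ?_
    simp only [y₁, LinearMap.comp_apply]
    rw [Module.Basis.constr_basis, over_map_ι, hy]
    simp
  have hy₁' (v) : (c.ι.app j₁).left.hom (y₁ v) = g (π v) := congrArg (fun f => f v) hy₁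
  obtain ⟨m, e, he⟩ := Submodule.fg_iff_exists_fin_generating_family.mp hker
  have hzero (i : Fin m) : ∃ (j : J) (h : j₁ ≤ j),
      (K.map (homOfLE h)).left.hom (y₁ (e i)) = 0 := by
    apply colim_eq_zero hc
    have : e i ∈ LinearMap.ker π := he ▸ Submodule.subset_span ⟨i, rfl⟩
    rw [hy₁', LinearMap.mem_ker.mp this, map_zero]
  choose k hk hk0 using hzero
  obtain ⟨j₂, hj₂⟩ := fin_bound k
  obtain ⟨j₃, hj₃⟩ : ∃ j₃, j₃ = max j₁ j₂ := ⟨_, rfl⟩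
  have h13 : j₁ ≤ j₃ := hj₃ ▸ le_max_left _ _
  have h23 : j₂ ≤ j₃ := hj₃ ▸ le_max_right _ _
  obtain ⟨g', hg'⟩ := factor_surj π hπ ((K.map (homOfLE h13)).left.hom ∘ₗ y₁) (by
    have : LinearMap.ker π ≤ LinearMap.ker ((K.map (homOfLE h13)).left.hom ∘ₗ y₁) := by
      rw [← he, Submodule.span_le]
      rintro _ ⟨i, rfl⟩
      have := over_map_map K (hk i) ((hj₂ i).trans h23) (y₁ (e i))
      rw [hk0, map_zero] at this
      exact this.symm
    exact fun v hv => this hv)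
  obtain ⟨h', hh'⟩ := h j₃ a ha g'
  refine ⟨(c.ι.app j₃).left.hom ∘ₗ h', ?_⟩
  rw [LinearMap.comp_assoc, hh']
  ext w
  obtain ⟨v, rfl⟩ := hπ w
  rw [LinearMap.comp_apply, hg', LinearMap.comp_apply, over_map_ι, hy₁']

end Chain

end CoverProof

namespace CoverProof

section Cover

open Cardinal

lemma exists_index (θ : Cardinal.{u}) : ∃ (J : Type u) (_ : LinearOrder J) (_ : OrderBot J)
    (_ : SuccOrder J) (_ : WellFoundedLT J) (_ : NoMaxOrder J), θ < #J ∧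
    (∀ (ι : Type u), #ι ≤ max ℵ₀ θ → ∀ f : ι → J, ∃ j, ∀ i, f i ≤ j) := by
  let κ := Order.succ (max ℵ₀ θ)
  have hκ : κ.IsRegular := isRegular_succ (le_max_left _ _)
  have : Fact κ.IsRegular := ⟨hκ⟩
  have : Nonempty κ.ord.ToType := by simpa using hκ.ne_zero
  refine ⟨κ.ord.ToType, inferInstance, WellFoundedLT.toOrderBot _, inferInstance,
    inferInstance, noMaxOrder hκ.aleph0_le, ?_, ?_⟩
  · rw [mk_ord_toType]
    exact lt_of_le_of_lt (le_max_right _ _) (Order.lt_succ _)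
  · intro ι hι f
    have hlt : HasCardinalLT ι κ := by
      rw [hasCardinalLT_iff_cardinal_mk_lt]
      exact lt_of_le_of_lt hι (Order.lt_succ _)
    exact ⟨IsCardinalFiltered.max f hlt, fun i => leOfHom (IsCardinalFiltered.toMax f hlt i)⟩

variable {R : Type u} [Ring R] {A : ModuleCat.{u} R}

/-- Objects all of whose maps to the class are injective. -/
def QQ (𝓚 : Set (FPArrow R)) (X : Over A) : Prop :=
  InY 𝓚 X.left ∧ ∀ Z : Over A, InY 𝓚 Z.left → ∀ f : X ⟶ Z, Function.Injective f.left.hom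

lemma exists_Q (𝓚 : Set (FPArrow R)) (T : Over A) (hT : InY 𝓚 T.left)
    (hpre : ∀ X : Over A, InY 𝓚 X.left → Nonempty (X ⟶ T)) :
    ∃ X : Over A, QQ 𝓚 X ∧ Nonempty (T ⟶ X) := by
  by_contra hcon
  push Not at hcon
  obtain ⟨J, _, _, _, _, _, -, hJ⟩ := exists_index (#T.left)
  obtain ⟨F, hF, hgood, hstep⟩ := exists_chain J
    (fun X : Over A => InY 𝓚 X.left ∧ Nonempty (T ⟶ X))
    (fun f => ¬ Function.Injective f.hom.left.hom ∧ #f.right.left ≤ #T.left) T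
    ⟨hT, ⟨𝟙 T⟩⟩ (by
      rintro X ⟨hX, ⟨t⟩⟩
      have h1 : ¬ QQ 𝓚 X := fun h => (hcon X h).elim' t
      simp only [QQ, not_and, not_forall] at h1
      obtain ⟨Z, hZ, f, hf⟩ := h1 hX
      obtain ⟨z⟩ := hpre Z hZ
      refine ⟨T, f ≫ z, ⟨hT, ⟨𝟙 T⟩⟩, ?_, le_rfl⟩
      intro hinj
      apply hf
      have : Function.Injective (z.left.hom ∘ f.left.hom) := hinj
      exact this.of_comp) (by
      intro J' _ _ G c hc hG
      refine ⟨InY.colim hc fun j => (hG j).1, ?_⟩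
      obtain ⟨j⟩ := ‹Nonempty J'›
      obtain ⟨t⟩ := (hG j).2
      exact ⟨t ≫ c.ι.app j⟩)
  let c := colimit.cocone F
  have hc : IsColimit c := colimit.isColimit F
  have hβ : ∀ j : J, ∃ (b : J) (h : Order.succ j ≤ b), ∀ x : (F.obj (Order.succ j)).left,
      (c.ι.app (Order.succ j)).left.hom x = 0 → (F.map (homOfLE h)).left.hom x = 0 := by
    intro j
    have : ∀ x : (F.obj (Order.succ j)).left, ∃ (b : J) (h : Order.succ j ≤ b),
        (c.ι.app (Order.succ j)).left.hom x = 0 → (F.map (homOfLE h)).left.hom x = 0 := by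
      intro x
      by_cases hx : (c.ι.app (Order.succ j)).left.hom x = 0
      · obtain ⟨b, h, hb⟩ := colim_eq_zero hc _ x hx
        exact ⟨b, h, fun _ => hb⟩
      · exact ⟨_, le_rfl, fun h => absurd h hx⟩
    choose b hb hb' using this
    obtain ⟨m, hm⟩ := hJ (F.obj (Order.succ j)).left ((hstep j).2.trans (le_max_right _ _)) b
    refine ⟨m, (hb 0).trans (hm 0), fun x hx => ?_⟩
    rw [← over_map_map F (hb x) (hm x), hb' x hx, map_zero]
  choose β hβ1 hβ2 using hβ
  let s : ℕ → J := fun n => Nat.rec ⊥ (fun _ j => β j) n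
  have hs (n) : s n < s (n + 1) := lt_of_lt_of_le (Order.lt_succ (s n)) (hβ1 (s n))
  obtain ⟨γ, hγ⟩ : ∃ γ, IsLUB (Set.range s) γ := by
    obtain ⟨m, hm⟩ := hJ (ULift.{u} ℕ) (by simp) (fun n => s n.down)
    have hne : (upperBounds (Set.range s)).Nonempty := ⟨m, by rintro _ ⟨n, rfl⟩; exact hm ⟨n⟩⟩
    refine ⟨WellFounded.min wellFounded_lt _ hne, WellFounded.min_mem _ _ hne, fun a ha => ?_⟩
    exact not_lt.mp (WellFounded.not_lt_min wellFounded_lt _ ha)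
  have hsγ (n) : s n ≤ γ := hγ.1 ⟨n, rfl⟩
  have hlt : ∀ a < γ, ∃ n, a < s n := by
    intro a ha
    by_contra h
    push Not at h
    exact absurd (hγ.2 (by rintro _ ⟨n, rfl⟩; exact h n)) (not_le.mpr ha)
  have hlim : Order.IsSuccLimit γ := by
    refine ⟨fun h => ?_, fun a ha => ?_⟩
    · exact absurd (h (hsγ 0)) (not_le.mpr (lt_of_lt_of_le (hs 0) (hsγ 1)))
    · obtain ⟨n, hn⟩ := hlt a ha.1
      exact ha.2 hn (lt_of_lt_of_le (hs n) (hsγ (n + 1)))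
  have hcγ := F.isColimitOfIsWellOrderContinuous γ hlim
  have : Nonempty (Set.Iio γ) := ⟨⟨s 0, lt_of_lt_of_le (hs 0) (hsγ 1)⟩⟩
  apply (hstep γ).1
  rw [injective_iff_map_eq_zero]
  intro (x : (F.obj γ).left) hx
  obtain ⟨i, hi, y, hy⟩ : ∃ (i : J) (hi : i < γ) (y : (F.obj i).left),
      (F.map (homOfLE hi.le)).left.hom y = x := by
    obtain ⟨⟨i, hi⟩, y, hy⟩ := colim_surj hcγ x
    exact ⟨i, hi, y, hy⟩
  obtain ⟨n, hn⟩ := hlt i hi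
  have h1 : i ≤ Order.succ (s n) := hn.le.trans (Order.le_succ _)
  have h2 : Order.succ (s n) ≤ γ := (hβ1 (s n)).trans (hsγ (n + 1))
  have hx' : (F.map (homOfLE (Order.le_succ γ))).left.hom x = 0 := hx
  have h3 := hβ2 (s n) ((F.map (homOfLE h1)).left.hom y) (by
    rw [over_map_ι, ← over_map_ι c ((le_of_lt hi).trans (Order.le_succ γ)),
      ← over_map_map F (le_of_lt hi) (Order.le_succ γ), hy, hx', map_zero])
  rw [over_map_map] at h3
  have h4 := over_map_map F (h1.trans (hβ1 (s n))) (hsγ (n + 1)) y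
  rw [h3, map_zero] at h4
  exact hy.symm.trans h4.symm

lemma QQ.surj {𝓚 : Set (FPArrow R)} {T : Over A} (hT : QQ 𝓚 T)
    (hpre : ∀ X : Over A, InY 𝓚 X.left → Nonempty (X ⟶ T)) (u : T ⟶ T) :
    Function.Surjective u.left.hom := by
  by_contra hu
  obtain ⟨J, _, _, _, _, _, hJc, hJ⟩ := exists_index (#T.left)
  obtain ⟨F, hF, hgood, hstep⟩ := exists_chain J
    (fun X : Over A => QQ 𝓚 X)
    (fun f => ¬ Function.Surjective f.hom.left.hom) T hT (by
      intro X hX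
      obtain ⟨t⟩ := hpre X hX.1
      refine ⟨T, t ≫ u, hT, fun h => hu ?_⟩
      have h : Function.Surjective (u.left.hom ∘ t.left.hom) := h
      exact h.of_comp) (by
      intro J' _ _ G c hc hG
      refine ⟨InY.colim hc fun j => (hG j).1, fun Z hZ f => ?_⟩
      rw [injective_iff_map_eq_zero]
      intro x hx
      obtain ⟨j, y, rfl⟩ := colim_surj hc x
      have := (hG j).2 Z hZ (c.ι.app j ≫ f)
      rw [injective_iff_map_eq_zero] at this
      rw [this y hx, map_zero])
  let c := colimit.cocone F
  have hc : IsColimit c := colimit.isColimit F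
  obtain ⟨t⟩ := hpre c.pt (InY.colim hc fun j => (hgood j).1)
  have hx : ∀ j, ∃ x : (F.obj (Order.succ j)).left,
      ∀ y, (F.map (homOfLE (Order.le_succ j))).left.hom y ≠ x := by
    intro j
    have : ¬ Function.Surjective (F.map (homOfLE (Order.le_succ j))).left.hom := hstep j
    simpa [Function.Surjective] using this
  choose x hx using hx
  let φ : J → T.left := fun j => (c.ι.app (Order.succ j) ≫ t).left.hom (x j)
  have hφ : ∀ i j, i < j → φ i ≠ φ j := by
    intro i j hij heq
    have h1 : Order.succ i ≤ j := Order.succ_le_of_lt hij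
    apply hx j ((F.map (homOfLE h1)).left.hom (x i))
    apply (hgood (Order.succ j)).2 T hT.1 (c.ι.app (Order.succ j) ≫ t)
    refine Eq.trans ?_ heq
    change t.left.hom ((c.ι.app (Order.succ j)).left.hom _) =
      t.left.hom ((c.ι.app (Order.succ i)).left.hom _)
    rw [over_map_ι, over_map_ι]
  have hinj : Function.Injective φ := by
    intro i j hij
    by_contra hne
    rcases lt_or_gt_of_ne hne with h | h
    · exact hφ i j h hij
    · exact hφ j i h hij.symm
  exact absurd (mk_le_of_injective hinj) (not_le.mpr hJc)

end Cover

end CoverProof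


namespace CoverProof

section Precover

open Cardinal

variable {R : Type u} [Ring R] {A : ModuleCat.{u} R}

lemma pure_bot {M : Type*} [AddCommGroup M] [Module R M] : IsPureSub (⊥ : Submodule R M) := by
  intro n K hK y hy
  exact ⟨0, by simp, fun v hv => by simpa using ((Submodule.mem_bot R).mp (hy v hv)).symm⟩

lemma pure_comap {M N : Type*} [AddCommGroup M] [Module R M] [AddCommGroup N] [Module R N]
    (e : M ≃ₗ[R] N) {P : Submodule R N} (hP : IsPureSub P) :
    IsPureSub (P.comap e.toLinearMap) := by
  intro n K hK y hy
  obtain ⟨y', h1, h2⟩ := hP n K hK (e.toLinearMap ∘ₗ y) hy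
  refine ⟨e.symm.toLinearMap ∘ₗ y', fun v => ?_, fun v hv => ?_⟩
  · simpa using h1 v
  · simp [h2 v hv]

/-- A pure submodule contained in a submodule is pure in it. -/
lemma pure_inf_sub {M : Type*} [AddCommGroup M] [Module R M] {S P : Submodule R M}
    (h : IsPureSub (S ⊓ P)) : IsPureSub (P.comap S.subtype) := by
  intro n K hK y hy
  obtain ⟨y', h1, h2⟩ := h n K hK (S.subtype ∘ₗ y) (fun v hv => ⟨(y v).2, hy v hv⟩)
  exact ⟨y'.codRestrict S (fun v => (h1 v).1), fun v => (h1 v).2,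
    fun v hv => Subtype.ext (h2 v hv)⟩

lemma one_step (𝓚 : Set (FPArrow R)) {Q : Type u} (S : Q → Type u) [∀ q, AddCommGroup (S q)]
    [∀ q, Module R (S q)] (S' : ∀ q, Submodule R (S q)) (hS' : ∀ q, IsPureSub (S' q))
    (hS : ∀ q, InY 𝓚 (S q)) (X : Over A) (hX : InY 𝓚 X.left) (g : ∀ q, S' q →ₗ[R] X.left)
    (t : ∀ q, S q →ₗ[R] A) (hgt : ∀ q w, X.hom.hom (g q w) = t q w) :
    ∃ (Y : Over A) (f : X ⟶ Y), InY 𝓚 Y.left ∧ ∀ q, ∃ l : S q →ₗ[R] Y.left,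
      (∀ w : S' q, l w = f.left.hom (g q w)) ∧ ∀ s, Y.hom.hom (l s) = t q s := by
  classical
  let G : (Π₀ q, S' q) →ₗ[R] X.left := DFinsupp.lsum ℕ g
  let I : (Π₀ q, S' q) →ₗ[R] (Π₀ q, S q) := DFinsupp.mapRange.linearMap fun q => (S' q).subtype
  let ν : (Π₀ q, S' q) →ₗ[R] (X.left × Π₀ q, S q) := (-G).prod I
  have hν : ∀ w q, (ν w).2 q = w q := fun w q => by
    rfl
  have hI (q : Q) (w : S' q) : I (DFinsupp.single q w) = DFinsupp.single q (w : S q) :=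
    DFinsupp.mapRange_single (f := fun q (x : S' q) => (x : S q)) (hf := fun _ => rfl)
  have hp := pure_range S' hS' ν hν
  let τ : (X.left × Π₀ q, S q) →ₗ[R] A := X.hom.hom.coprod (DFinsupp.lsum ℕ t)
  have hτ : LinearMap.range ν ≤ LinearMap.ker τ := by
    rw [LinearMap.range_le_ker_iff]
    apply DFinsupp.lhom_ext
    intro q w
    simp [τ, ν, G, hI, hgt]
  let Y : Over A := Over.mk (Y := ModuleCat.of R ((X.left × Π₀ q, S q) ⧸ LinearMap.range ν))
    (ModuleCat.ofHom ((LinearMap.range ν).liftQ τ hτ))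
  let f : X ⟶ Y := Over.homMk
    (ModuleCat.ofHom ((LinearMap.range ν).mkQ ∘ₗ LinearMap.inl R _ _)) (by
      ext x
      change τ (x, 0) = X.hom.hom x
      simp [τ])
  refine ⟨Y, f, (hX.prod (InY.dfinsupp hS)).pure_quot hp, fun q => ?_⟩
  refine ⟨(LinearMap.range ν).mkQ ∘ₗ LinearMap.inr R _ _ ∘ₗ DFinsupp.lsingle q, ?_, ?_⟩
  · intro w
    change (LinearMap.range ν).mkQ (0, DFinsupp.single q (w : S q)) =
      (LinearMap.range ν).mkQ (g q w, 0)
    rw [← sub_eq_zero, ← map_sub, Submodule.mkQ_apply, Submodule.Quotient.mk_eq_zero]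
    refine ⟨DFinsupp.single q w, ?_⟩
    simp [ν, G, hI]
  · intro s
    change τ (0, DFinsupp.single q s) = t q s
    simp [τ]

/-- Index of squares. -/
structure Sq (𝓚 : Set (FPArrow R)) (Λ : Type u) (X : Over A) where
  K : Submodule R (Λ →₀ R)
  S' : Submodule R ((Λ →₀ R) ⧸ K)
  hS : InY 𝓚 ((Λ →₀ R) ⧸ K)
  hS' : IsPureSub S'
  g : S' →ₗ[R] X.left
  t : ((Λ →₀ R) ⧸ K) →ₗ[R] A
  hgt : ∀ w, X.hom.hom (g w) = t w

/-- A morphism solving all small lifting problems. -/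
def Solves (𝓚 : Set (FPArrow R)) (lam : Cardinal.{u}) {X Y : Over A} (f : X ⟶ Y) : Prop :=
  ∀ (S : Type u) [AddCommGroup S] [Module R S] (S' : Submodule R S), #S ≤ lam → InY 𝓚 S →
    IsPureSub S' → ∀ (g : S' →ₗ[R] X.left) (t : S →ₗ[R] A),
    (∀ w, X.hom.hom (g w) = t w) → ∃ l : S →ₗ[R] Y.left,
      (∀ w : S', l w = f.left.hom (g w)) ∧ ∀ s, Y.hom.hom (l s) = t s

lemma exists_solves (𝓚 : Set (FPArrow R)) (lam : Cardinal.{u}) (X : Over A) (hX : InY 𝓚 X.left) :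
    ∃ (Y : Over A) (f : X ⟶ Y), InY 𝓚 Y.left ∧ Solves 𝓚 lam f := by
  let Λ := lam.out
  obtain ⟨Y, f, hY, h⟩ := one_step 𝓚 (Q := Sq 𝓚 Λ X) (fun q => (Λ →₀ R) ⧸ q.K) (fun q => q.S')
    (fun q => q.hS') (fun q => q.hS) X hX (fun q => q.g) (fun q => q.t) (fun q => q.hgt)
  refine ⟨Y, f, hY, ?_⟩
  intro S _ _ S' hc hS hS' g t hgt
  have hc' : #S ≤ #Λ := by rwa [mk_out]
  obtain ⟨⟨i, hi⟩⟩ := hc'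
  let σ : Λ → S := Function.invFun i
  have hσ : Function.Surjective σ := Function.invFun_surjective hi
  let π : (Λ →₀ R) →ₗ[R] S := Finsupp.lift S R Λ σ
  have hπ : Function.Surjective π := by
    intro s
    obtain ⟨a, rfl⟩ := hσ s
    exact ⟨Finsupp.single a 1, by simp [π]⟩
  let e := π.quotKerEquivOfSurjective hπ
  let r : S'.comap e.toLinearMap →ₗ[R] S' :=
    (e.toLinearMap ∘ₗ (S'.comap e.toLinearMap).subtype).codRestrict S' (fun x => x.2)
  obtain ⟨l, h1, h2⟩ := h
    { K := LinearMap.ker π, S' := S'.comap e.toLinearMap, hS := hS.of_equiv e.symm,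
      hS' := pure_comap e hS', g := g ∘ₗ r, t := t ∘ₗ e.toLinearMap, hgt := fun w => hgt (r w) }
  refine ⟨l ∘ₗ e.symm.toLinearMap, fun w => ?_, fun s => ?_⟩
  · have := h1 ⟨e.symm w, by simp⟩
    refine this.trans ?_
    change f.left.hom (g (r _)) = _
    congr 1
    refine congrArg g ?_
    apply Subtype.ext
    exact e.apply_symm_apply w
  · refine (h2 (e.symm s)).trans ?_
    simp

lemma lift_stage {J : Type u} [LinearOrder J] [Nonempty J] {F : J ⥤ Over A} {c : Cocone F}
    (hc : IsColimit c) (S : Type u) [AddCommGroup S] [Module R S]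
    (hJ : ∀ f : S → J, ∃ j, ∀ i, f i ≤ j) (hJ' : ∀ f : (S →₀ R) → J, ∃ j, ∀ i, f i ≤ j)
    (g : S →ₗ[R] c.pt.left) : ∃ (j : J) (g' : S →ₗ[R] (F.obj j).left),
      ∀ w, (c.ι.app j).left.hom (g' w) = g w := by
  choose j₀ y hy using fun s => colim_surj hc (g s)
  obtain ⟨j₁, hj₁⟩ := hJ j₀
  let π : (S →₀ R) →ₗ[R] S := Finsupp.lift S R S id
  have hπ : Function.Surjective π := fun s => ⟨Finsupp.single s 1, by simp [π]⟩
  let y₁ : (S →₀ R) →ₗ[R] (F.obj j₁).left :=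
    Finsupp.lift _ R S (fun s => (F.map (homOfLE (hj₁ s))).left.hom (y s))
  have hy₁ : (c.ι.app j₁).left.hom ∘ₗ y₁ = g ∘ₗ π := by
    apply Finsupp.lhom_ext'
    intro s
    apply LinearMap.ext_ring
    simp only [LinearMap.comp_apply, Finsupp.lsingle_apply, y₁, π, Finsupp.lift_apply]
    simp only [zero_smul, Finsupp.sum_single_index, one_smul, id]
    rw [over_map_ι, hy]
  have hy₁' (v) : (c.ι.app j₁).left.hom (y₁ v) = g (π v) := congrArg (fun f => f v) hy₁
  have hk : ∀ v : S →₀ R, ∃ (b : J) (h : j₁ ≤ b), π v = 0 →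
      (F.map (homOfLE h)).left.hom (y₁ v) = 0 := by
    intro v
    by_cases hv : π v = 0
    · obtain ⟨b, h, hb⟩ := colim_eq_zero hc j₁ (y₁ v) (by rw [hy₁', hv, map_zero])
      exact ⟨b, h, fun _ => hb⟩
    · exact ⟨j₁, le_rfl, fun h => absurd h hv⟩
  choose b hb hb' using hk
  obtain ⟨m, hm⟩ := hJ' b
  have h1m : j₁ ≤ m := (hb 0).trans (hm 0)
  obtain ⟨g', hg'⟩ := factor_surj π hπ ((F.map (homOfLE h1m)).left.hom ∘ₗ y₁) (by
    intro v hv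
    change (F.map (homOfLE h1m)).left.hom (y₁ v) = 0
    rw [← over_map_map F (hb v) (hm v), hb' v hv, map_zero])
  refine ⟨m, g', fun w => ?_⟩
  obtain ⟨v, rfl⟩ := hπ w
  rw [hg', ← hy₁']
  exact over_map_ι c h1m (y₁ v)

lemma exists_precover (𝓚 : Set (FPArrow R)) (A : ModuleCat.{u} R) :
    ∃ T : Over A, InY 𝓚 T.left ∧ ∀ X : Over A, InY 𝓚 X.left → Nonempty (X ⟶ T) := by
  obtain ⟨lam, hlam⟩ := exists_small_pure (R := R)
  let Λ := lam.out
  obtain ⟨J, _, _, _, _, _, -, hJ⟩ := exists_index (max lam #(Λ →₀ R))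
  obtain ⟨F, hF, hgood, hstep⟩ := exists_chain J
    (fun X : Over A => InY 𝓚 X.left) (fun f => Solves 𝓚 lam f.hom)
    (Over.mk (0 : ModuleCat.of R PUnit.{u+1} ⟶ A)) InY.punit
    (fun X hX => exists_solves 𝓚 lam X hX)
    (fun J' _ _ G c hc hG => InY.colim hc hG)
  let c := colimit.cocone F
  have hc : IsColimit c := colimit.isColimit F
  have hT : InY 𝓚 c.pt.left := InY.colim hc hgood
  refine ⟨c.pt, hT, fun X hX => ?_⟩
  -- solving small problems in the colimit
  have hsolve : ∀ (S : Type u) [AddCommGroup S] [Module R S] (S' : Submodule R S), #S ≤ lam →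
      InY 𝓚 S → IsPureSub S' → ∀ (g : S' →ₗ[R] c.pt.left) (t : S →ₗ[R] A),
      (∀ w, c.pt.hom.hom (g w) = t w) → ∃ l : S →ₗ[R] c.pt.left,
      (∀ w : S', l w = g w) ∧ ∀ s, c.pt.hom.hom (l s) = t s := by
    intro S _ _ S' hcS hS hS' g t hgt
    have hc1 : #S' ≤ lam := (mk_subtype_le _).trans hcS
    have hc2 : #(S' →₀ R) ≤ #(Λ →₀ R) := by
      have : #S' ≤ #Λ := by rwa [mk_out]
      obtain ⟨⟨i, hi⟩⟩ := this
      exact mk_le_of_injective (Finsupp.mapDomain_injective hi)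
    obtain ⟨j, g', hg'⟩ := lift_stage hc S'
      (hJ _ (hc1.trans ((le_max_left _ _).trans (le_max_right _ _))))
      (hJ _ (hc2.trans ((le_max_right _ _).trans (le_max_right _ _)))) g
    obtain ⟨l, h1, h2⟩ := hstep j S S' hcS hS hS' g' t (fun w => by
      rw [← hgt w, ← hg' w]
      exact (over_hom_hom (c.ι.app j) (g' w)).symm)
    refine ⟨(c.ι.app (Order.succ j)).left.hom ∘ₗ l, fun w => ?_, fun s => ?_⟩
    · change (c.ι.app (Order.succ j)).left.hom (l w) = g w
      rw [h1 w, ← hg' w]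
      exact over_map_ι c (Order.le_succ j) (g' w)
    · rw [← h2 s]
      exact over_hom_hom (c.ι.app (Order.succ j)) (l s)
  -- Zorn
  let φ : X.left →ₗ[R] A := X.hom.hom
  let τ : c.pt.left →ₗ[R] A := c.pt.hom.hom
  let 𝒵 : Set (X.left →ₗ.[R] c.pt.left) :=
    {f | IsPureSub f.domain ∧ ∀ x : f.domain, τ (f x) = φ x}
  obtain ⟨f, hf⟩ : ∃ f, Maximal (· ∈ 𝒵) f := by
    refine zorn_le₀ 𝒵 fun ch hch hchain => ?_
    rcases ch.eq_empty_or_nonempty with rfl | hne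
    · exact ⟨⊥, ⟨pure_bot, fun x => by
        have : (x : X.left) = 0 := (Submodule.mem_bot R).mp x.2
        have h0 : x = 0 := Subtype.ext this
        rw [h0]; simp⟩, by simp⟩
    · have hdir : DirectedOn (· ≤ ·) ch := hchain.directedOn
      refine ⟨LinearPMap.sSup ch hdir, ⟨?_, ?_⟩, fun f hf => LinearPMap.le_sSup hdir hf⟩
      · rw [LinearPMap.domain_sSup]
        refine pure_sSup _ ?_ (hne.image _) ?_
        · rintro _ ⟨a, ha, rfl⟩ _ ⟨b, hb, rfl⟩
          obtain ⟨d, hd, h1, h2⟩ := hdir a ha b hb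
          exact ⟨_, ⟨d, hd, rfl⟩, h1.1, h2.1⟩
        · rintro _ ⟨a, ha, rfl⟩
          exact (hch ha).1
      · rintro ⟨x, hx⟩
        obtain ⟨a, ha, hxa⟩ := (LinearPMap.mem_domain_sSup_iff hne hdir).mp hx
        have h1 := LinearPMap.sSup_apply hdir ha ⟨x, hxa⟩
        rw [h1]
        exact (hch ha).2 ⟨x, hxa⟩
  have htop : ∀ y, y ∈ f.domain := by
    intro y
    obtain ⟨S, hyS, hSc, hSp, hinf, hsup⟩ := hlam X.left f.domain hf.1.1 y
    let r : f.domain.comap S.subtype →ₗ[R] f.domain :=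
      (S.subtype ∘ₗ (f.domain.comap S.subtype).subtype).codRestrict f.domain (fun x => x.2)
    obtain ⟨l, h1, h2⟩ := hsolve S (f.domain.comap S.subtype) hSc (hX.pure_sub hSp)
      (pure_inf_sub hinf) (f.toFun ∘ₗ r) (φ ∘ₗ S.subtype) (fun w => hf.1.2 (r w))
    let fS : X.left →ₗ.[R] c.pt.left := ⟨S, l⟩
    have hcompat : ∀ (x : fS.domain) (y : f.domain), (x : X.left) = y → fS x = f y := by
      rintro ⟨x, hx⟩ ⟨y, hy⟩ (rfl : x = y)
      exact h1 ⟨⟨x, hx⟩, hy⟩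
    have hmem : fS.sup f hcompat ∈ 𝒵 := by
      refine ⟨hsup, ?_⟩
      rintro ⟨z, hz⟩
      obtain ⟨a, ha, b, hb, rfl⟩ := Submodule.mem_sup.mp hz
      refine (congrArg τ (LinearPMap.sup_apply hcompat ⟨a, ha⟩ ⟨b, hb⟩ ⟨a + b, hz⟩ rfl)).trans ?_
      rw [map_add, hf.1.2]
      change τ (l ⟨a, ha⟩) + φ b = φ (a + b)
      rw [map_add]
      congr 1
      exact h2 ⟨a, ha⟩
    have hle := hf.2 hmem (LinearPMap.right_le_sup _ _ _)
    exact hle.1 (Submodule.mem_sup_left hyS)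
  let h : X.left →ₗ[R] c.pt.left := f.toFun ∘ₗ LinearMap.id.codRestrict f.domain htop
  refine ⟨Over.homMk (ModuleCat.ofHom h) ?_⟩
  ext x
  exact hf.1.2 ⟨x, htop x⟩

lemma exists_cover (𝓚 : Set (FPArrow R)) (A : ModuleCat.{u} R) :
    ∃ (Y : ModuleCat.{u} R) (f : Y ⟶ A), InY 𝓚 Y ∧
      (∀ X : ModuleCat.{u} R, InY 𝓚 X → ∀ g : X ⟶ A, ∃ h : X ⟶ Y, h ≫ f = g) ∧
      ∀ h : Y ⟶ Y, h ≫ f = f → IsIso h := by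
  obtain ⟨T, hT, hpre⟩ := exists_precover 𝓚 A
  obtain ⟨X, hX, ⟨t⟩⟩ := exists_Q 𝓚 T hT hpre
  have hpre' : ∀ Z : Over A, InY 𝓚 Z.left → Nonempty (Z ⟶ X) := fun Z hZ =>
    (hpre Z hZ).map (· ≫ t)
  refine ⟨X.left, X.hom, hX.1, fun Z hZ g => ?_, fun h hh => ?_⟩
  · obtain ⟨z⟩ := hpre' (Over.mk g) hZ
    exact ⟨z.left, Over.w z⟩
  · let u : X ⟶ X := Over.homMk h hh
    have h1 : Function.Injective h.hom := hX.2 X hX.1 u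
    have h2 : Function.Surjective h.hom := hX.surj hpre' u
    exact (ConcreteCategory.isIso_iff_bijective h).mpr ⟨h1, h2⟩

end Precover

end CoverProof


namespace CoverProof

open ExactPaper

lemma ext1Zero_iff {𝒜 : Type u} [Category.{v} 𝒜] [Abelian 𝒜] (E : ExactStructure 𝒜)
    {X C Ω : 𝒜} (k : Ω ⟶ C) (d : C ⟶ X) (w : k ≫ d = 0)
    (hk : E.conflation (ShortComplex.mk k d w)) (hC : E.EProjective C) (N : 𝒜) :
    E.Ext1Zero X N ↔ ∀ g : Ω ⟶ N, ∃ h : C ⟶ N, k ≫ h = g := by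
  have hse := E.shortExact_of_conflation _ hk
  have hed : Epi d := hse.epi_g
  constructor
  · intro hX g
    obtain ⟨W, p, wp, hc⟩ := E.admMono_pushout k g ⟨X, d, w, hk⟩
    have hse' := E.shortExact_of_conflation _ hc
    have hep : Epi p := hse'.epi_g
    let q : pushout k g ⟶ X := pushout.desc d 0 (by simp [w])
    have hq : pushout.inr k g ≫ q = 0 := pushout.inr_desc _ _ _
    have hq' : pushout.inl k g ≫ q = d := pushout.inl_desc _ _ _
    obtain ⟨a, ha⟩ : ∃ a : X ⟶ W, d ≫ a = pushout.inl k g ≫ p :=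
      have := hse.epi_g
      ⟨hse.exact.desc (pushout.inl k g ≫ p)
        (by simp [pushout.condition_assoc, wp]), hse.exact.g_desc _ _⟩
    obtain ⟨b, hb⟩ : ∃ b : W ⟶ X, p ≫ b = q :=
      have := hse'.epi_g
      ⟨hse'.exact.desc q hq, hse'.exact.g_desc _ _⟩
    have hqa : q ≫ a = p := by
      apply pushout.hom_ext
      · rw [← assoc, hq', ha]
      · rw [← assoc, hq, zero_comp, wp]
    have hab : a ≫ b = 𝟙 X := by
      rw [← cancel_epi d, ← assoc, ha, assoc, hb, hq', comp_id]
    have hba : b ≫ a = 𝟙 W := by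
      rw [← cancel_epi p, ← assoc, hb, hqa, comp_id]
    have hc' : E.conflation (ShortComplex.mk (pushout.inr k g) q hq) :=
      E.conflation_of_iso (ShortComplex.mk (pushout.inr k g) p wp)
        (ShortComplex.mk (pushout.inr k g) q hq)
        (ShortComplex.isoMk (Iso.refl N) (Iso.refl (pushout k g)) ⟨b, a, hba, hab⟩
          (by simp) (by simp [hb])) hc
    obtain ⟨r, hr⟩ := hX _ _ _ _ hc'
    exact ⟨pushout.inl k g ≫ r, by rw [pushout.condition_assoc, hr, comp_id]⟩
  · intro h Z i p wip hc
    have hse' := E.shortExact_of_conflation _ hc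
    have hmi : Mono i := hse'.mono_f
    have hmi' := hse'.mono_f
    have hed' := hse.epi_g
    obtain ⟨s, hs⟩ := hC _ hc d
    have hs : s ≫ p = d := hs
    obtain ⟨u, hu⟩ : ∃ u : Ω ⟶ N, u ≫ i = k ≫ s :=
      ⟨hse'.exact.lift (k ≫ s) (by simp [hs, w]), hse'.exact.lift_f _ _⟩
    obtain ⟨t, ht⟩ := h u
    obtain ⟨σ, hσ⟩ : ∃ σ : X ⟶ Z, d ≫ σ = s - t ≫ i :=
      ⟨hse.exact.desc (s - t ≫ i) (by
        change k ≫ _ = 0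
        rw [Preadditive.comp_sub, ← assoc, ht, hu, sub_self]), hse.exact.g_desc _ _⟩
    have hσp : σ ≫ p = 𝟙 X := by
      rw [← cancel_epi d, ← assoc, hσ, Preadditive.sub_comp, hs, assoc, wip, comp_zero, sub_zero,
        comp_id]
    obtain ⟨r, hr⟩ : ∃ r : Z ⟶ N, r ≫ i = 𝟙 Z - p ≫ σ :=
      ⟨hse'.exact.lift (𝟙 Z - p ≫ σ) (by
        change _ ≫ p = 0
        rw [Preadditive.sub_comp, assoc, hσp, id_comp, comp_id, sub_self]), hse'.exact.lift_f _ _⟩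
    refine ⟨r, ?_⟩
    rw [← cancel_mono i, assoc, hr, Preadditive.comp_sub, ← assoc i p, wip, zero_comp, sub_zero,
      id_comp, comp_id]

lemma fp_of_conflations {R : Type u} [Ring R] {S T : ShortComplex (ModuleCat.{u} R)}
    (hS : S.ShortExact) (hT : T.ShortExact) (e : T.X₃ = S.X₁)
    (h1 : Module.FinitePresentation R S.X₂) (h2 : Module.Finite R T.X₂) :
    Module.FinitePresentation R S.X₃ := by
  have := hS.epi_g
  have := hT.epi_g
  have hs : Function.Surjective S.g.hom := (ModuleCat.epi_iff_surjective S.g).mp inferInstance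
  have ht : Function.Surjective T.g.hom := (ModuleCat.epi_iff_surjective T.g).mp inferInstance
  have hf : Module.Finite R T.X₃ := Module.Finite.of_surjective _ ht
  rw [e] at hf
  refine Module.finitePresentation_of_surjective S.g.hom hs ?_
  rw [← hS.exact.moduleCat_range_eq_ker]
  exact Module.Finite.iff_fg.mp (Module.Finite.range S.f.hom)

end CoverProof


open ExactPaper CategoryTheory Limits in
/-- **Theorem 4.4(1), second part**: let `ℰ` be an exact structure on `Mod R` with enough
`ℰ`-projectives and `ℰ`-injectives containing all pure exact sequences, and let `𝒳` be a
class of pure projective right `R`-modules such that every `X ∈ 𝒳` admits an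
`ℰ`-presentation `C₂ → C₁ → C₀ → X → 0` with each `Cᵢ` finitely presented and
`ℰ`-projective (each induced short exact sequence of syzygies being a conflation).
Then `𝒳^⊥` is covering. -/
theorem rightPerp_covering_of_pureProjective
    {R : Type u} [Ring R]
    (E : ExactStructure (ModuleCat.{u} Rᵐᵒᵖ))
    (hproj : E.EnoughProjectives) (hinj : E.EnoughInjectives)
    (hpure : ∀ S : ShortComplex (ModuleCat.{u} Rᵐᵒᵖ), PureSES S → E.conflation S)
    (𝒳 : Set (ModuleCat.{u} Rᵐᵒᵖ)) (h𝒳 : ∀ X ∈ 𝒳, PureProjective X)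
    (hpres : ∀ X ∈ 𝒳, ∃ (C₀ C₁ C₂ Ω₁ Ω₂ Ω₃ : ModuleCat.{u} Rᵐᵒᵖ)
      (k₀ : Ω₁ ⟶ C₀) (d₀ : C₀ ⟶ X) (w₀ : k₀ ≫ d₀ = 0)
      (k₁ : Ω₂ ⟶ C₁) (d₁ : C₁ ⟶ Ω₁) (w₁ : k₁ ≫ d₁ = 0)
      (k₂ : Ω₃ ⟶ C₂) (d₂ : C₂ ⟶ Ω₂) (w₂ : k₂ ≫ d₂ = 0),
      E.conflation (ShortComplex.mk k₀ d₀ w₀) ∧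
      E.conflation (ShortComplex.mk k₁ d₁ w₁) ∧
      E.conflation (ShortComplex.mk k₂ d₂ w₂) ∧
      Module.FinitePresentation Rᵐᵒᵖ C₀ ∧ Module.FinitePresentation Rᵐᵒᵖ C₁ ∧
      Module.FinitePresentation Rᵐᵒᵖ C₂ ∧
      E.EProjective C₀ ∧ E.EProjective C₁ ∧ E.EProjective C₂) :
    ∀ A : ModuleCat.{u} Rᵐᵒᵖ, ∃ (Y : ModuleCat.{u} Rᵐᵒᵖ) (f : Y ⟶ A),
      IsCover (E.rightPerp 𝒳) f := by
  classical
  choose! C₀ C₁ C₂ Ω₁ Ω₂ Ω₃ k₀ d₀ w₀ k₁ d₁ w₁ k₂ d₂ w₂ h using hpres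
  let 𝓚 : Set (CoverProof.FPArrow Rᵐᵒᵖ) :=
    {a | ∃ X ∈ 𝒳, a.Ω = Ω₁ X ∧ a.C = C₀ X ∧ HEq a.k (k₀ X).hom}
  have key : ∀ N : ModuleCat.{u} Rᵐᵒᵖ, N ∈ E.rightPerp 𝒳 ↔ CoverProof.InY 𝓚 N := by
    intro N
    constructor
    · rintro hN ⟨Ω, C, k, hΩ, hC⟩ ⟨X, hX, h1, h2, h3⟩ g
      dsimp only at h1 h2 h3 g ⊢
      subst h1 h2
      obtain rfl := eq_of_heq h3
      obtain ⟨t, ht⟩ := (CoverProof.ext1Zero_iff E (k₀ X) (d₀ X) (w₀ X hX) (h X hX).1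
        (h X hX).2.2.2.2.2.2.1 N).mp (hN X hX) (ModuleCat.ofHom g)
      exact ⟨t.hom, congrArg ModuleCat.Hom.hom ht⟩
    · intro hN X hX
      obtain ⟨c0, c1, c2, f0, f1, f2, p0, -, -⟩ := h X hX
      rw [CoverProof.ext1Zero_iff E (k₀ X) (d₀ X) (w₀ X hX) c0 p0 N]
      intro g
      have hfp : Module.FinitePresentation Rᵐᵒᵖ (Ω₁ X) :=
        CoverProof.fp_of_conflations (E.shortExact_of_conflation _ c1)
          (E.shortExact_of_conflation _ c2) rfl f1 inferInstance
      obtain ⟨t, ht⟩ := hN ⟨Ω₁ X, C₀ X, (k₀ X).hom, hfp, f0⟩ ⟨X, hX, rfl, rfl, HEq.rfl⟩ g.hom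
      exact ⟨ModuleCat.ofHom t, ModuleCat.hom_ext ht⟩
  intro A
  obtain ⟨Y, f, hY, h1, h2⟩ := CoverProof.exists_cover 𝓚 A
  exact ⟨Y, f, ⟨(key Y).mpr hY, fun X hX g => h1 X ((key X).mp hX) g⟩, h2⟩
end

section
/- Let R be an associative unital ring and let ℰ be an exact structure on the category Mod R of right R-modules such that Mod R has enough ℰ-projectives and enough ℰ-injectives and ℰ contains all pure exact sequences. If 𝒴 is a class of pure injective right R-modules, then the class ^⊥𝒴 = {M : every conflation 0 → Y → Z → M → 0 with Y ∈ 𝒴 splits} is covering (every right R-module admits a ^⊥𝒴-cover) and is closed under pure quotients (if 0 → A → B → C → 0 is pure exact and B ∈ ^⊥𝒴, then C ∈ ^⊥𝒴). -/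
open CategoryTheory Category Limits

universe v u

namespace PureAux

variable {R : Type u} [Ring R]

/-- Elementwise purity of a submodule. -/
def IsPure {X : Type u} [AddCommGroup X] [Module R X] (P : Submodule R X) : Prop :=
  ∀ (m n : ℕ) (A : Fin m → Fin n → R) (x : Fin n → X),
    (∀ j, ∑ i, A j i • x i ∈ P) →
      ∃ y : Fin n → X, (∀ i, y i ∈ P) ∧ ∀ j, ∑ i, A j i • y i = ∑ i, A j i • x i

/-- Elementwise pure epimorphism. -/
def PureEpi {X Z : Type u} [AddCommGroup X] [Module R X] [AddCommGroup Z] [Module R Z]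
    (σ : X →ₗ[R] Z) : Prop :=
  ∀ (m n : ℕ) (A : Fin m → Fin n → R) (z : Fin n → Z),
    (∀ j, ∑ i, A j i • z i = 0) →
      ∃ x : Fin n → X, (∀ j, ∑ i, A j i • x i = 0) ∧ ∀ i, σ (x i) = z i

theorem PureEpi.surjective {X Z : Type u} [AddCommGroup X] [Module R X] [AddCommGroup Z]
    [Module R Z] {σ : X →ₗ[R] Z} (h : PureEpi σ) : Function.Surjective σ := by
  intro z
  obtain ⟨x, -, hx⟩ := h 0 1 (fun j => j.elim0) (fun _ => z) (fun j => j.elim0)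
  exact ⟨x 0, hx 0⟩

theorem IsPure.mkQ {X : Type u} [AddCommGroup X] [Module R X] {P : Submodule R X}
    (hP : IsPure P) : PureEpi P.mkQ := by
  intro m n A z hz
  choose x hx using fun i => P.mkQ_surjective (z i)
  obtain ⟨y, hy, hA⟩ := hP m n A x (by
    intro j
    rw [← Submodule.ker_mkQ P, LinearMap.mem_ker, map_sum]
    simp only [map_smul, hx, hz])
  refine ⟨fun i => x i - y i, fun j => ?_, fun i => ?_⟩
  · simp only [smul_sub, Finset.sum_sub_distrib, hA, sub_self]
  · have : P.mkQ (y i) = 0 := by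
      rw [← LinearMap.mem_ker, Submodule.ker_mkQ]; exact hy i
    rw [map_sub, this, hx, sub_zero]

/-- Transitivity: a pure submodule of the quotient by a pure submodule pulls back. -/
theorem IsPure.comap {X : Type u} [AddCommGroup X] [Module R X] {P : Submodule R X}
    (hP : IsPure P) {Q : Submodule R (X ⧸ P)} (hQ : IsPure Q) : IsPure (Q.comap P.mkQ) := by
  intro m n A x hx
  obtain ⟨y', hy', hA'⟩ := hQ m n A (fun i => P.mkQ (x i)) (by
    intro j
    have := hx j
    rw [Submodule.mem_comap, map_sum] at this
    simpa only [map_smul] using this)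
  choose y hy using fun i => P.mkQ_surjective (y' i)
  obtain ⟨z, hz, hAz⟩ := hP m n A (fun i => x i - y i) (by
    intro j
    rw [← Submodule.ker_mkQ P, LinearMap.mem_ker, map_sum]
    simp only [map_smul, map_sub, smul_sub, Finset.sum_sub_distrib, hy, hA', sub_self])
  refine ⟨fun i => y i + z i, fun i => ?_, fun j => ?_⟩
  · have : P.mkQ (z i) = 0 := by
      rw [← LinearMap.mem_ker, Submodule.ker_mkQ]; exact hz i
    rw [Submodule.mem_comap, map_add, this, add_zero, hy]
    exact hy' i
  · simp only [smul_add, Finset.sum_add_distrib, hAz, smul_sub, Finset.sum_sub_distrib]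
    abel

theorem isPure_bot {X : Type u} [AddCommGroup X] [Module R X] :
    IsPure (⊥ : Submodule R X) := by
  intro m n A x hx
  refine ⟨fun _ => 0, fun i => by simp, fun j => ?_⟩
  have := hx j
  rw [Submodule.mem_bot] at this
  simp [this]

theorem isPure_sSup {X : Type u} [AddCommGroup X] [Module R X] (c : Set (Submodule R X))
    (hc : ∀ P ∈ c, IsPure P) (hne : c.Nonempty) (hch : IsChain (· ≤ ·) c) :
    IsPure (sSup c) := by
  intro m n A x hx
  have hdir : DirectedOn (· ≤ ·) c := hch.directedOn
  simp only [Submodule.mem_sSup_of_directed hne hdir] at hx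
  choose p hpc hp using hx
  obtain ⟨q, hqc, hq⟩ : ∃ q ∈ c, ∀ j, p j ≤ q := by
    have : ∀ s : Finset (Fin m), ∃ q ∈ c, ∀ j ∈ s, p j ≤ q := by
      intro s
      induction s using Finset.induction_on with
      | empty => exact ⟨_, hne.some_mem, by simp⟩
      | insert a s ha ih =>
        obtain ⟨q, hq, hs⟩ := ih
        obtain ⟨r, hr, h1, h2⟩ := hdir q hq (p a) (hpc a)
        refine ⟨r, hr, fun j hj => ?_⟩
        rcases Finset.mem_insert.1 hj with rfl | hj
        · exact h2
        · exact (hs j hj).trans h1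
    obtain ⟨q, hq, h⟩ := this Finset.univ
    exact ⟨q, hq, fun j => h j (Finset.mem_univ j)⟩
  obtain ⟨y, hy, hA⟩ := hc q hqc m n A x (fun j => hq j (hp j))
  exact ⟨y, fun i => (le_sSup hqc : q ≤ sSup c) (hy i), hA⟩

/-- Skolem terms. -/
inductive STerm (R : Type u) : Type u
  | pt : STerm R
  | add : STerm R → STerm R → STerm R
  | smul : R → STerm R → STerm R
  | sol : (m n : ℕ) → (Fin m → Fin n → R) → (Fin m → STerm R) → Fin n → STerm R

open Classical in
/-- Chosen solution of a linear system modulo `N`. -/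
noncomputable def solve {X : Type u} [AddCommGroup X] [Module R X] (N : Submodule R X)
    {m n : ℕ} (A : Fin m → Fin n → R) (v : Fin m → X) : Fin n → X :=
  if h : ∃ y : Fin n → X, ∀ j, ∑ i, A j i • y i - v j ∈ N then h.choose else 0

/-- Value of a Skolem term. -/
noncomputable def STerm.val {X : Type u} [AddCommGroup X] [Module R X] (N : Submodule R X)
    (x₀ : X) : STerm R → X
  | .pt => x₀
  | .add s t => s.val N x₀ + t.val N x₀
  | .smul r s => r • s.val N x₀
  | .sol _ _ A s i => solve N A (fun j => (s j).val N x₀) i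

/-- A fixed module which is large enough to map onto Skolem hulls of elements. -/
abbrev BMod (R : Type u) [Ring R] : Type u := STerm R →₀ R

theorem exists_skolem {X : Type u} [AddCommGroup X] [Module R X] (N : Submodule R X) (x₀ : X) :
    ∃ L : BMod R →ₗ[R] X, (∃ b, L b = x₀) ∧
      ∀ (m n : ℕ) (A : Fin m → Fin n → R) (x : Fin n → X) (b : Fin m → BMod R),
        (∀ j, ∑ i, A j i • x i - L (b j) ∈ N) →
          ∃ c : Fin n → BMod R, ∀ j, ∑ i, A j i • L (c i) - L (b j) ∈ N := by
  let L : BMod R →ₗ[R] X := Finsupp.linearCombination R (STerm.val N x₀)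
  have hL1 : ∀ s, L (Finsupp.single s 1) = STerm.val N x₀ s := by
    intro s; simp [L]
  have hL : ∀ b, ∃ s, L b = STerm.val N x₀ s := by
    intro b
    induction b using Finsupp.induction_linear with
    | zero => exact ⟨.smul 0 .pt, by simp [STerm.val]⟩
    | add f g hf hg =>
      obtain ⟨s, hs⟩ := hf
      obtain ⟨t, ht⟩ := hg
      exact ⟨.add s t, by simp [STerm.val, hs, ht]⟩
    | single s r => exact ⟨.smul r s, by simp [STerm.val, L]⟩
  refine ⟨L, ⟨Finsupp.single .pt 1, by simp [hL1, STerm.val]⟩, ?_⟩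
  intro m n A x b hb
  choose s hs using fun j => hL (b j)
  refine ⟨fun i => Finsupp.single (.sol m n A s i) 1, fun j => ?_⟩
  have hex : ∃ y : Fin n → X, ∀ j, ∑ i, A j i • y i - STerm.val N x₀ (s j) ∈ N :=
    ⟨x, fun j => by rw [← hs]; exact hb j⟩
  have := hex.choose_spec j
  simp only [hL1, STerm.val, solve, dif_pos hex, hs]
  exact this

/-- Terms for the bounding set. -/
inductive WTerm (R B M : Type u) : Type u
  | zero : WTerm R B M
  | add : WTerm R B M → WTerm R B M → WTerm R B M
  | smul : R → WTerm R B M → WTerm R B M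
  | op : Set B → (B → M) → (B → WTerm R B M) → B → WTerm R B M

open Classical in
/-- Chosen twin. -/
noncomputable def twin {B X M : Type u} [AddCommGroup X] [Module R X] [AddCommGroup M]
    [Module R M] [AddCommGroup B] [Module R B] (f : X →ₗ[R] M) (D : Set B) (g : B → M)
    (w : B → X) : B →ₗ[R] X :=
  if h : ∃ L : B →ₗ[R] X, (∀ b ∈ D, L b = w b) ∧ ∀ b, f (L b) = g b then h.choose else 0

/-- Value of a bounding term. -/
noncomputable def WTerm.val {B X M : Type u} [AddCommGroup X] [Module R X] [AddCommGroup M]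
    [Module R M] [AddCommGroup B] [Module R B] (f : X →ₗ[R] M) : WTerm R B M → X
  | .zero => 0
  | .add s t => s.val f + t.val f
  | .smul r s => r • s.val f
  | .op D g w b => twin f D g (fun b => (w b).val f) b

/-- Bican–El Bashir–Enochs: if the kernel of `f : X → M` contains no nonzero pure submodule
then the size of `X` is bounded in terms of `R` and `M` only. -/
theorem exists_surjective {X M : Type u} [AddCommGroup X] [Module R X] [AddCommGroup M]
    [Module R M] (f : X →ₗ[R] M)
    (hf : ∀ P : Submodule R X, IsPure P → P ≤ LinearMap.ker f → P = ⊥) :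
    Function.Surjective (WTerm.val f : WTerm R (BMod R) M → X) := by
  let N : Submodule R X :=
    { carrier := Set.range (WTerm.val f : WTerm R (BMod R) M → X)
      zero_mem' := ⟨.zero, rfl⟩
      add_mem' := by
        rintro _ _ ⟨s, rfl⟩ ⟨t, rfl⟩
        exact ⟨.add s t, rfl⟩
      smul_mem' := by
        rintro r _ ⟨s, rfl⟩
        exact ⟨.smul r s, rfl⟩ }
  intro x₀
  change x₀ ∈ N
  obtain ⟨L, ⟨b₀, hb₀⟩, hL⟩ := exists_skolem N x₀
  let D : Set (BMod R) := {b | L b ∈ N}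
  have hw : ∀ b : BMod R, ∃ w : WTerm R (BMod R) M, b ∈ D → w.val f = L b := by
    intro b
    by_cases hb : b ∈ D
    · obtain ⟨w, hw⟩ := hb
      exact ⟨w, fun _ => hw⟩
    · exact ⟨.zero, fun h => absurd h hb⟩
  choose w hw using hw
  have hex : ∃ L' : BMod R →ₗ[R] X, (∀ b ∈ D, L' b = (w b).val f) ∧ ∀ b, f (L' b) = f (L b) :=
    ⟨L, fun b hb => (hw b hb).symm, fun _ => rfl⟩
  obtain ⟨L', hL'N, hL'D, hL'f⟩ : ∃ L' : BMod R →ₗ[R] X, (∀ b, L' b ∈ N) ∧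
      (∀ b ∈ D, L' b = L b) ∧ ∀ b, f (L' b) = f (L b) := by
    refine ⟨twin f D (fun b => f (L b)) (fun b => (w b).val f), fun b => ?_, fun b hb => ?_,
      fun b => ?_⟩
    · exact ⟨.op D (fun b => f (L b)) w b, rfl⟩
    · rw [twin, dif_pos hex, hex.choose_spec.1 b hb, hw b hb]
    · rw [twin, dif_pos hex, hex.choose_spec.2 b]
  have hpure : IsPure (LinearMap.range (L - L')) := by
    intro m n A x hx
    choose b hb using hx
    obtain ⟨c, hc⟩ := hL m n A x b (by
      intro j
      rw [← hb j, LinearMap.sub_apply]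
      have : L (b j) - L' (b j) - L (b j) = - L' (b j) := by abel
      rw [this]
      exact N.neg_mem (hL'N _))
    refine ⟨fun i => (L - L') (c i), fun i => ⟨c i, rfl⟩, fun j => ?_⟩
    have h1 : (∑ i, A j i • c i - b j) ∈ D := by
      change L _ ∈ N
      simpa only [map_sub, map_sum, map_smul] using hc j
    have h2 : (L - L') (∑ i, A j i • c i - b j) = 0 := by
      rw [LinearMap.sub_apply, hL'D _ h1, sub_self]
    rw [map_sub, hb, map_sum, sub_eq_zero] at h2
    simpa only [map_smul] using h2
  have := hf _ hpure (by
    rintro _ ⟨b, rfl⟩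
    rw [LinearMap.mem_ker, LinearMap.sub_apply, map_sub, hL'f, sub_self])
  have h3 : (L - L') b₀ = 0 := by
    have : (L - L') b₀ ∈ LinearMap.range (L - L') := ⟨b₀, rfl⟩
    simp_all
  rw [LinearMap.sub_apply, sub_eq_zero, hb₀] at h3
  rw [h3]
  exact hL'N _

/-- Any `f : X → M` factors through a pure quotient of `X` that is a quotient of a fixed
free module. -/
theorem exists_small_factor {X M : Type u} [AddCommGroup X] [Module R X] [AddCommGroup M]
    [Module R M] (f : X →ₗ[R] M) :
    ∃ (K : Submodule R (WTerm R (BMod R) M →₀ R))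
      (σ : X →ₗ[R] ((WTerm R (BMod R) M →₀ R) ⧸ K))
      (g : ((WTerm R (BMod R) M →₀ R) ⧸ K) →ₗ[R] M), PureEpi σ ∧ g ∘ₗ σ = f := by
  obtain ⟨P, -, hmax⟩ := zorn_le_nonempty₀ {P : Submodule R X | IsPure P ∧ P ≤ LinearMap.ker f}
    (by
      intro c hc hch y hy
      refine ⟨sSup c, ⟨isPure_sSup c (fun P hP => (hc hP).1) ⟨y, hy⟩ hch, ?_⟩,
        fun z hz => le_sSup hz⟩
      exact sSup_le fun P hP => (hc hP).2) ⊥ ⟨isPure_bot, bot_le⟩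
  obtain ⟨hP, hPf⟩ := hmax.prop
  let f' : (X ⧸ P) →ₗ[R] M := P.liftQ f hPf
  have hs := exists_surjective f' (by
    intro Q hQ hQf
    have h1 := hmax.le_of_ge (y := Q.comap P.mkQ) ⟨hP.comap hQ, by
      intro x hx
      have := hQf hx
      simpa [f'] using this⟩ (by
      intro x hx
      rw [Submodule.mem_comap]
      have : P.mkQ x = 0 := by rw [← LinearMap.mem_ker, Submodule.ker_mkQ]; exact hx
      rw [this]; exact Q.zero_mem)
    rw [eq_bot_iff]
    intro q hq
    obtain ⟨x, rfl⟩ := P.mkQ_surjective q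
    have hx : x ∈ P := h1 hq
    rw [Submodule.mem_bot, ← LinearMap.mem_ker, Submodule.ker_mkQ]
    exact hx)
  let π : (WTerm R (BMod R) M →₀ R) →ₗ[R] (X ⧸ P) := Finsupp.linearCombination R (WTerm.val f')
  have hπ : Function.Surjective π := by
    intro q
    obtain ⟨w, rfl⟩ := hs q
    exact ⟨Finsupp.single w 1, by simp [π]⟩
  let e := π.quotKerEquivOfSurjective hπ
  refine ⟨LinearMap.ker π, e.symm.toLinearMap ∘ₗ P.mkQ, f' ∘ₗ e.toLinearMap, ?_, ?_⟩
  · intro m n A z hz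
    obtain ⟨x, hx, hxz⟩ := hP.mkQ m n A (fun i => e (z i)) (by
      intro j
      have := congrArg e (hz j)
      rw [map_sum, map_zero] at this
      simpa only [map_smul] using this)
    refine ⟨x, hx, fun i => ?_⟩
    rw [LinearMap.comp_apply, hxz]
    simp
  · ext x
    simp [f']

/-- A pure epimorphism is surjective on maps from finitely presented modules. -/
theorem PureEpi.lift_fp {X Z F : Type u} [AddCommGroup X] [Module R X] [AddCommGroup Z]
    [Module R Z] [AddCommGroup F] [Module R F] {σ : X →ₗ[R] Z} (hσ : PureEpi σ)
    (hF : Module.FinitePresentation R F) (h : F →ₗ[R] Z) : ∃ k : F →ₗ[R] X, σ ∘ₗ k = h := by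
  obtain ⟨n, K, e, hK⟩ := Module.FinitePresentation.exists_fin R F
  obtain ⟨m, a, ha⟩ := Submodule.fg_iff_exists_fin_generating_family.1 hK
  let ε : (Fin n → R) →ₗ[R] F := e.symm.toLinearMap ∘ₗ K.mkQ
  have hε : ∀ v, ε v = 0 ↔ v ∈ K := by
    intro v
    simp [ε]
  have hsum : ∀ {Y : Type u} [AddCommGroup Y] [Module R Y] (t : (Fin n → R) →ₗ[R] Y)
      (v : Fin n → R), t v = ∑ i, v i • t (Pi.single i 1) := by
    intro Y _ _ t v
    conv_lhs => rw [pi_eq_sum_univ' v]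
    rw [map_sum]
    refine Finset.sum_congr rfl fun i _ => ?_
    rw [map_smul]
  obtain ⟨x, hx, hxz⟩ := hσ m n a (fun i => h (ε (Pi.single i 1))) (by
    intro j
    have := hsum (h ∘ₗ ε) (a j)
    simp only [LinearMap.comp_apply] at this
    rw [← this, (hε (a j)).2 (by rw [← ha]; exact Submodule.subset_span ⟨j, rfl⟩), map_zero])
  let t : (Fin n → R) →ₗ[R] X := Fintype.linearCombination R x
  have ht : ∀ v, t v = ∑ i, v i • x i := fun v => by simp [t, Fintype.linearCombination_apply]
  have hKt : K ≤ LinearMap.ker t := by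
    rw [← ha, Submodule.span_le]
    rintro _ ⟨j, rfl⟩
    change t (a j) = 0
    rw [ht, hx]
  refine ⟨K.liftQ t hKt ∘ₗ e.toLinearMap, ?_⟩
  ext y
  obtain ⟨v, hv⟩ := K.mkQ_surjective (e y)
  have hy : y = ε v := by simp [ε, hv]
  have hv' : e y = K.mkQ v := hv.symm
  simp only [LinearMap.comp_apply, LinearEquiv.coe_coe, hv']
  change σ (K.liftQ t hKt (K.mkQ v)) = _
  have h1 : K.liftQ t hKt (K.mkQ v) = t v := by simp
  rw [h1, ht, map_sum, hy]
  have := hsum (h ∘ₗ ε) v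
  simp only [LinearMap.comp_apply] at this
  rw [this]
  simp only [map_smul, hxz]

end PureAux

namespace PureAux

section Chains

variable {R : Type u} [Ring R] {C : Type v} [Category.{u} C] (V : C ⥤ ModuleCat.{u} R)

/-- A transfinite chain in `C` whose successor objects are all (isomorphic to) `T`. -/
structure Chain (T : C) (t : ∀ Y : C, Y ⟶ T) (J : Type u) [LinearOrder J] [SuccOrder J] where
  F : J ⥤ C
  succIso : ∀ j : J, T ≅ F.obj (Order.succ j)
  map_succ : ∀ j : J, F.map (homOfLE (Order.le_succ j)) = t (F.obj j) ≫ (succIso j).hom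
  lim_surj : ∀ j : J, Order.IsSuccLimit j → ∀ x : V.obj (F.obj j),
    ∃ (i : J) (h : i < j) (y : V.obj (F.obj i)), V.map (F.map (homOfLE h.le)) y = x
  fromT : ∀ j : J, T ⟶ F.obj j
  top : C
  toTop : ∀ j : J, F.obj j ⟶ top
  w : ∀ (i j : J) (h : i ≤ j), F.map (homOfLE h) ≫ toTop j = toTop i
  top_surj : ∀ x : V.obj top, ∃ (j : J) (y : V.obj (F.obj j)), V.map (toTop j) y = x

theorem exists_chain
    (hcol : ∀ (J : Type u) [LinearOrder J] [Nonempty J], HasColimitsOfShape J C)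
    (hpres : ∀ (J : Type u) [LinearOrder J] [Nonempty J], PreservesColimitsOfShape J V)
    (T : C) (t : ∀ Y : C, Y ⟶ T) (J : Type u) [LinearOrder J] [SuccOrder J] [OrderBot J]
    [WellFoundedLT J] [NoMaxOrder J] : Nonempty (Chain V T t J) := by
  have hne : ∀ j : J, Order.IsSuccLimit j → Nonempty (Set.Iio j) := fun j hj =>
    ⟨⟨⊥, bot_lt_iff_ne_bot.2 hj.ne_bot⟩⟩
  have hit : HasIterationOfShape J C :=
    { hasColimitsOfShape_of_isSuccLimit := fun j hj => by
        have := hne j hj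
        exact hcol (Set.Iio j)
      hasColimitsOfShape := hcol J }
  let Φ : SmallObject.SuccStruct C := { X₀ := T, succ := fun _ => T, toSucc := t }
  refine ⟨{
    F := Φ.iterationFunctor J
    succIso := fun j => (Φ.iterationFunctorObjSuccIso j (not_isMax j)).symm
    map_succ := fun j => Φ.iterationFunctor_map_succ j (not_isMax j)
    lim_surj := ?_
    fromT := fun j => (Φ.ιIterationFunctor J).app j
    top := Φ.iteration J
    toTop := fun j => (Φ.iterationCocone J).ι.app j
    w := fun i j h => (Φ.iterationCocone J).w (homOfLE h)
    top_surj := ?_ }⟩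
  · intro j hj x
    have := hne j hj
    have := hpres (Set.Iio j)
    have hc := (Φ.iterationFunctor J).isColimitOfIsWellOrderContinuous j hj
    have hc' := isColimitOfPreserves V hc
    obtain ⟨⟨i, hi⟩, y, hy⟩ := Concrete.isColimit_exists_rep _ hc' x
    exact ⟨i, hi, y, hy⟩
  · intro x
    have := hpres J
    have hc' := isColimitOfPreserves V (Φ.isColimitIterationCocone J)
    obtain ⟨j, y, hy⟩ := Concrete.isColimit_exists_rep _ hc' x
    exact ⟨j, y, hy⟩

/-- Every map out of `X` is injective. -/
def Rigid (X : C) : Prop := ∀ (Z : C) (g : X ⟶ Z), Function.Injective (V.map g)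

/-- Weakly terminal objects. -/
def WT (X : C) : Prop := ∀ Y : C, Nonempty (Y ⟶ X)

variable {V}

theorem Chain.map_map {T : C} {t : ∀ Y : C, Y ⟶ T} {J : Type u} [LinearOrder J] [SuccOrder J]
    (c : Chain V T t J) {i j k : J} (h : i ≤ j) (h' : j ≤ k) (x : V.obj (c.F.obj i)) :
    V.map (c.F.map (homOfLE h')) (V.map (c.F.map (homOfLE h)) x) =
      V.map (c.F.map (homOfLE (h.trans h'))) x := by
  rw [← ConcreteCategory.comp_apply, ← V.map_comp, ← c.F.map_comp]
  rfl

theorem Chain.map_top {T : C} {t : ∀ Y : C, Y ⟶ T} {J : Type u} [LinearOrder J] [SuccOrder J]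
    (c : Chain V T t J) {i j : J} (h : i ≤ j) (x : V.obj (c.F.obj i)) :
    V.map (c.toTop j) (V.map (c.F.map (homOfLE h)) x) = V.map (c.toTop i) x := by
  rw [← ConcreteCategory.comp_apply, ← V.map_comp, c.w]

theorem Chain.map_succ_apply {T : C} {t : ∀ Y : C, Y ⟶ T} {J : Type u} [LinearOrder J]
    [SuccOrder J] (c : Chain V T t J) (i : J) (x : V.obj (c.F.obj i)) :
    V.map (c.F.map (homOfLE (Order.le_succ i))) x =
      V.map (c.succIso i).hom (V.map (t (c.F.obj i)) x) := by
  rw [← ConcreteCategory.comp_apply, ← V.map_comp, c.map_succ]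

theorem map_iso_bijective {X Y : C} (e : X ≅ Y) : Function.Bijective (V.map e.hom) :=
  ConcreteCategory.bijective_of_isIso (V.map e.hom)

theorem map_comp_app {X Y Z : C} (f : X ⟶ Y) (g : Y ⟶ Z) (x : V.obj X) :
    V.map (f ≫ g) x = V.map g (V.map f x) := by
  rw [V.map_comp, ConcreteCategory.comp_apply]

theorem Rigid.of_iso {X Y : C} (e : X ≅ Y) (h : Rigid V X) : Rigid V Y := by
  intro Z g
  have h1 := h Z (e.hom ≫ g)
  intro a b hab
  obtain ⟨a, rfl⟩ := (map_iso_bijective e).2 a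
  obtain ⟨b, rfl⟩ := (map_iso_bijective e).2 b
  rw [← map_comp_app, ← map_comp_app] at hab
  rw [h1 hab]

/-- A sufficiently long chain has an injective step. -/
theorem Chain.exists_injective {T : C} {t : ∀ Y : C, Y ⟶ T} {κ : Cardinal.{u}}
    [Fact κ.IsRegular] (hκ : Cardinal.aleph0 < κ) (hTκ : Cardinal.mk (V.obj T) < κ)
    {J : Type u} [LinearOrder J] [SuccOrder J] [OrderBot J] [WellFoundedLT J] [NoMaxOrder J]
    (hJ : ∀ (K : Type u) (s : K → J), Cardinal.mk K < κ → ∃ j, ∀ k, s k ≤ j)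
    (c : Chain V T t J) :
    ∃ j, Function.Injective (V.map (t (c.F.obj j))) := by
  classical
  have hstage : ∀ a : J, ∃ (k : J) (hk : Order.succ a ≤ k), ∀ x y : V.obj (c.F.obj (Order.succ a)),
      (∃ (l : J) (hl : Order.succ a ≤ l), V.map (c.F.map (homOfLE hl)) x =
        V.map (c.F.map (homOfLE hl)) y) →
        V.map (c.F.map (homOfLE hk)) x = V.map (c.F.map (homOfLE hk)) y := by
    intro a
    let e := c.succIso a
    let Q (x y : V.obj (c.F.obj (Order.succ a))) (l : J) : Prop :=
      ∃ hl : Order.succ a ≤ l, V.map (c.F.map (homOfLE hl)) x = V.map (c.F.map (homOfLE hl)) y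
    let s : (V.obj T × V.obj T) → J := fun p =>
      if h : ∃ l, Q (V.map e.hom p.1) (V.map e.hom p.2) l then h.choose else ⊥
    obtain ⟨k, hk⟩ := hJ _ s (by
      rw [Cardinal.mk_prod, Cardinal.lift_id]
      exact Cardinal.mul_lt_of_lt (Fact.out : κ.IsRegular).aleph0_le hTκ hTκ)
    refine ⟨max k (Order.succ a), le_max_right _ _, fun x y => ?_⟩
    rintro ⟨l, hl, hxy⟩
    obtain ⟨x, rfl⟩ := (map_iso_bijective e).2 x
    obtain ⟨y, rfl⟩ := (map_iso_bijective e).2 y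
    have hex : ∃ l, Q (V.map e.hom x) (V.map e.hom y) l := ⟨l, hl, hxy⟩
    have h1 : hex.choose ≤ k := by
      have := hk (x, y)
      simp only [s, dif_pos hex] at this
      exact this
    obtain ⟨h2, h3⟩ := hex.choose_spec
    have h4 := congrArg (V.map (c.F.map (homOfLE (h1.trans (le_max_left k (Order.succ a)))))) h3
    rwa [c.map_map, c.map_map] at h4
  choose st hst hst' using hstage
  let p : ℕ → J := fun n => Nat.rec ⊥ (fun _ a => st a) n
  have hp : ∀ n, p (n + 1) = st (p n) := fun _ => rfl
  have hlt : ∀ n, p n < p (n + 1) := fun n =>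
    lt_of_lt_of_le (Order.lt_succ (p n)) (by rw [hp]; exact hst _)
  obtain ⟨b, hb⟩ := hJ (ULift ℕ) (fun n => p n.down) (by simpa using hκ)
  have hne : {j : J | ∀ n, p n ≤ j}.Nonempty := ⟨b, fun n => hb ⟨n⟩⟩
  let j := WellFounded.min (wellFounded_lt (α := J)) _ hne
  have hj : ∀ n, p n ≤ j := WellFounded.min_mem (wellFounded_lt (α := J)) _ hne
  have hjmin : ∀ i, i < j → ∃ n, i < p n := by
    intro i hi
    by_contra hcon
    push Not at hcon
    exact WellFounded.not_lt_min (wellFounded_lt (α := J)) {j : J | ∀ n, p n ≤ j} (x := i) hcon hi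
  have hjlt : ∀ n, p n < j := fun n => (hlt n).trans_le (hj (n + 1))
  have hlim : Order.IsSuccLimit j := by
    refine ⟨fun hm => ?_, fun k hk => ?_⟩
    · exact not_lt_of_ge (hm (hj 0)) (hjlt 0)
    · obtain ⟨n, hn⟩ := hjmin k hk.lt
      exact hk.2 hn (hjlt n)
  refine ⟨j, fun x y hxy => ?_⟩
  have hrep : ∀ x : V.obj (c.F.obj j), ∃ n : ℕ, ∀ m, n ≤ m → ∃ (h : Order.succ (p m) ≤ j)
      (z : V.obj (c.F.obj (Order.succ (p m)))), V.map (c.F.map (homOfLE h)) z = x := by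
    intro x
    obtain ⟨i, hi, y, rfl⟩ := c.lim_surj j hlim x
    obtain ⟨n, hn⟩ := hjmin i hi
    refine ⟨n, fun m hm => ⟨Order.succ_le_of_lt (hjlt m), ?_⟩⟩
    have h1 : i ≤ Order.succ (p m) :=
      hn.le.trans (((strictMono_nat_of_lt_succ hlt).monotone hm).trans (Order.le_succ _))
    exact ⟨V.map (c.F.map (homOfLE h1)) y, by rw [c.map_map]⟩
  obtain ⟨n₁, h₁⟩ := hrep x
  obtain ⟨n₂, h₂⟩ := hrep y
  let m := max n₁ n₂
  obtain ⟨h, x', hx⟩ := h₁ m (le_max_left _ _)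
  obtain ⟨h', y', hy⟩ := h₂ m (le_max_right _ _)
  have h3 := hst' (p m) x' y' ⟨Order.succ j, h.trans (Order.le_succ j), by
    rw [← c.map_map h (Order.le_succ j), ← c.map_map h (Order.le_succ j), hx, hy,
      c.map_succ_apply, c.map_succ_apply, hxy]⟩
  have h4 := congrArg (V.map (c.F.map (homOfLE (hj (m + 1))))) h3
  have h5 : ∀ z, V.map (c.F.map (homOfLE (hj (m + 1)))) (V.map (c.F.map (homOfLE (hst (p m)))) z)
      = V.map (c.F.map (homOfLE h)) z := fun z => c.map_map (hst (p m)) (hj (m + 1)) z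
  rw [h5, h5, hx, hy] at h4
  exact h4

theorem exists_index (α : Type u) : ∃ κ : Cardinal.{u}, κ.IsRegular ∧ Cardinal.aleph0 < κ ∧
    Cardinal.mk α < κ :=
  ⟨Order.succ (max (Cardinal.mk α) Cardinal.aleph0),
    Cardinal.isRegular_succ (le_max_right _ _),
    lt_of_le_of_lt (le_max_right _ _) (Order.lt_succ _),
    lt_of_le_of_lt (le_max_left _ _) (Order.lt_succ _)⟩

theorem exists_wellOrder (α : Type u) : ∃ (κ : Cardinal.{u}) (_ : Fact κ.IsRegular)
    (J : Type u) (_ : LinearOrder J) (_ : SuccOrder J) (_ : OrderBot J) (_ : WellFoundedLT J)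
    (_ : NoMaxOrder J), Cardinal.aleph0 < κ ∧ Cardinal.mk α < κ ∧ Cardinal.mk J = κ ∧
    (∀ (K : Type u) (s : K → J), Cardinal.mk K < κ → ∃ j, ∀ k, s k ≤ j) := by
  obtain ⟨κ, hreg, h0, hα⟩ := exists_index α
  have hf : Fact κ.IsRegular := ⟨hreg⟩
  have hne : κ.ord ≠ 0 := by
    rw [Ne, Cardinal.ord_eq_zero]
    exact (Cardinal.aleph0_pos.trans h0).ne'
  let : OrderBot κ.ord.ToType :=
    { bot := WellFounded.min (wellFounded_lt (α := κ.ord.ToType)) Set.univ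
        (by
          have := IsCardinalFiltered.nonempty κ.ord.ToType κ
          exact Set.univ_nonempty)
      bot_le := fun a => WellFounded.min_le _ (Set.mem_univ a) }
  have hnm : NoMaxOrder κ.ord.ToType := Cardinal.noMaxOrder hreg.aleph0_le
  let : SuccOrder κ.ord.ToType := SuccOrder.ofLinearWellFoundedLT _
  refine ⟨κ, hf, κ.ord.ToType, inferInstance, inferInstance, inferInstance, inferInstance,
    hnm, h0, hα, by simp, fun K s hK => ?_⟩
  have hK' : HasCardinalLT K κ := by rwa [hasCardinalLT_iff_cardinal_mk_lt]
  exact ⟨IsCardinalFiltered.max s hK', fun k => leOfHom (IsCardinalFiltered.toMax s hK' k)⟩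

theorem exists_rigid
    (hcol : ∀ (J : Type u) [LinearOrder J] [Nonempty J], HasColimitsOfShape J C)
    (hpres : ∀ (J : Type u) [LinearOrder J] [Nonempty J], PreservesColimitsOfShape J V)
    (T : C) (hT : WT T) : ∃ X : C, WT X ∧ Rigid V X := by
  by_contra! hcon
  have ht : ∀ Y : C, ∃ t : Y ⟶ T, WT Y → ¬ Function.Injective (V.map t) := by
    intro Y
    by_cases hY : WT Y
    · have := hcon Y hY
      unfold Rigid at this
      push Not at this
      obtain ⟨Z, g, hg⟩ := this
      obtain ⟨s⟩ := hT Z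
      refine ⟨g ≫ s, fun _ hinj => hg fun a b hab => hinj ?_⟩
      rw [map_comp_app, map_comp_app, hab]
    · obtain ⟨s⟩ := hT Y
      exact ⟨s, fun h => absurd h hY⟩
  choose t ht using ht
  obtain ⟨κ, _, J, _, _, _, _, _, h0, hTκ, -, hJ⟩ := exists_wellOrder (V.obj T)
  obtain ⟨c⟩ := exists_chain V hcol hpres T t J
  obtain ⟨j, hj⟩ := c.exists_injective h0 hTκ hJ
  refine ht _ (fun Y => ?_) hj
  obtain ⟨s⟩ := hT Y
  exact ⟨s ≫ c.fromT j⟩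

theorem exists_minimal
    (hcol : ∀ (J : Type u) [LinearOrder J] [Nonempty J], HasColimitsOfShape J C)
    (hpres : ∀ (J : Type u) [LinearOrder J] [Nonempty J], PreservesColimitsOfShape J V)
    (T : C) (hT : WT T) (hTr : Rigid V T) :
    ∃ X : C, WT X ∧ Rigid V X ∧ ∀ h : X ⟶ X, Function.Surjective (V.map h) := by
  by_contra! hcon
  have ht : ∀ Y : C, ∃ t : Y ⟶ T, WT Y → Rigid V Y → ¬ Function.Surjective (V.map t) := by
    intro Y
    by_cases hY : WT Y ∧ Rigid V Y
    · obtain ⟨h, hh⟩ := hcon Y hY.1 hY.2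
      obtain ⟨s⟩ := hT Y
      refine ⟨h ≫ s, fun _ _ hs => hh fun y => ?_⟩
      obtain ⟨x, hx⟩ := hs (V.map s y)
      rw [map_comp_app] at hx
      exact ⟨x, hY.2 _ s hx⟩
    · obtain ⟨s⟩ := hT Y
      exact ⟨s, fun h1 h2 => absurd ⟨h1, h2⟩ hY⟩
  choose t ht using ht
  obtain ⟨κ, _, J, _, _, _, _, _, h0, hTκ, hJκ, hJ⟩ := exists_wellOrder (V.obj T)
  obtain ⟨c⟩ := exists_chain V hcol hpres T t J
  have hWT : ∀ j, WT (c.F.obj j) := fun j Y => by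
    obtain ⟨s⟩ := hT Y
    exact ⟨s ≫ c.fromT j⟩
  have hR : ∀ j, Rigid V (c.F.obj (Order.succ j)) := fun j => hTr.of_iso (c.succIso j)
  have hns : ∀ j : J, ∃ e : V.obj (c.F.obj (Order.succ (Order.succ j))),
      ∀ x, V.map (c.F.map (homOfLE (Order.le_succ (Order.succ j)))) x ≠ e := by
    intro j
    have h1 := ht _ (hWT (Order.succ j)) (hR j)
    by_contra! hall
    refine h1 fun y => ?_
    obtain ⟨x, hx⟩ := hall (V.map (c.succIso (Order.succ j)).hom y)
    rw [c.map_succ_apply] at hx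
    exact ⟨x, (map_iso_bijective _).1 hx⟩
  choose e he using hns
  have hrep : ∀ x : V.obj c.top, ∃ j : J, ∀ k, j ≤ k →
      ∃ z : V.obj (c.F.obj (Order.succ k)), V.map (c.toTop (Order.succ k)) z = x := by
    intro x
    obtain ⟨j, y, rfl⟩ := c.top_surj x
    exact ⟨j, fun k hk => ⟨V.map (c.F.map (homOfLE (hk.trans (Order.le_succ k)))) y,
      c.map_top _ y⟩⟩
  have htop : Rigid V c.top := by
    intro Z g x y hxy
    obtain ⟨j₁, h₁⟩ := hrep x
    obtain ⟨j₂, h₂⟩ := hrep y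
    obtain ⟨x', rfl⟩ := h₁ (max j₁ j₂) (le_max_left _ _)
    obtain ⟨y', rfl⟩ := h₂ (max j₁ j₂) (le_max_right _ _)
    rw [← map_comp_app, ← map_comp_app] at hxy
    rw [hR _ _ _ hxy]
  obtain ⟨s⟩ := hT c.top
  let φ : J → V.obj T := fun j => V.map s (V.map (c.toTop (Order.succ (Order.succ j))) (e j))
  have hφ' : ∀ i j, i < j → φ i ≠ φ j := by
    intro i j hij heq
    have h1 := htop _ s heq
    have h2 : Order.succ (Order.succ i) ≤ Order.succ j :=
      Order.succ_le_succ (Order.succ_le_of_lt hij)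
    rw [← c.map_top (h2.trans (Order.le_succ _)), ← c.map_map h2 (Order.le_succ _)] at h1
    exact he j _ (hR _ _ _ h1)
  have hφ : Function.Injective φ := by
    intro i j hij
    rcases lt_trichotomy i j with h | h | h
    · exact absurd hij (hφ' _ _ h)
    · exact h
    · exact absurd hij.symm (hφ' _ _ h)
  have := Cardinal.mk_le_of_injective hφ
  rw [hJκ] at this
  exact absurd hTκ (not_lt_of_ge this)

end Chains

end PureAux

namespace PureAux

open ExactPaper

section Lifting

variable {𝒜 : Type u} [Category.{v} 𝒜] [Abelian 𝒜] (E : ExactStructure 𝒜) (𝒴 : Set 𝒜)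

/-- `M` lifts along all conflations with first term in `𝒴`. -/
def Lifts (M : 𝒜) : Prop :=
  ∀ Y ∈ 𝒴, ∀ (Z C : 𝒜) (i : Y ⟶ Z) (p : Z ⟶ C) (w : i ≫ p = 0),
    E.conflation (ShortComplex.mk i p w) → ∀ h : M ⟶ C, ∃ k : M ⟶ Z, k ≫ p = h

theorem mem_leftPerp_iff (M : 𝒜) : M ∈ E.leftPerp 𝒴 ↔ Lifts E 𝒴 M := by
  constructor
  · intro hM Y hY Z C i p w hc h
    have hse := E.shortExact_of_conflation _ hc
    obtain ⟨X', f', w', hc'⟩ := E.admEpi_pullback p h ⟨Y, i, w, hc⟩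
    have hse' := E.shortExact_of_conflation _ hc'
    let j : Y ⟶ pullback p h := pullback.lift i 0 (by rw [w, zero_comp])
    have hj : j ≫ pullback.snd p h = 0 := pullback.lift_snd _ _ _
    have hjf : j ≫ pullback.fst p h = i := pullback.lift_fst _ _ _
    have hmi : Mono i := hse.mono_f
    have hmj : Mono j := by
      have : Mono (j ≫ pullback.fst p h) := by rw [hjf]; exact hmi
      exact mono_of_mono j (pullback.fst p h)
    have hmf : Mono f' := hse'.mono_f
    obtain ⟨a, ha⟩ : ∃ a : X' ⟶ Y, a ≫ j = f' := by
      have h0 : (f' ≫ pullback.fst p h) ≫ p = 0 := by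
        rw [assoc, pullback.condition, ← assoc, w', zero_comp]
      refine ⟨hse.exact.lift (f' ≫ pullback.fst p h) h0, ?_⟩
      apply pullback.hom_ext
      · rw [assoc, hjf]
        exact hse.exact.lift_f _ h0
      · rw [assoc, hj, w', comp_zero]
    obtain ⟨b, hb⟩ : ∃ b : Y ⟶ X', b ≫ f' = j := by
      exact ⟨hse'.exact.lift j hj, hse'.exact.lift_f j hj⟩
    let e : X' ≅ Y :=
      { hom := a
        inv := b
        hom_inv_id := by rw [← cancel_mono f', assoc, hb, ha, id_comp]
        inv_hom_id := by rw [← cancel_mono j, assoc, ha, hb, id_comp] }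
    have hcj : E.conflation (ShortComplex.mk j (pullback.snd p h) hj) := by
      refine E.conflation_of_iso _ _ ?_ hc'
      exact ShortComplex.isoMk e (Iso.refl _) (Iso.refl _) (by simp [e, ha]) (by simp)
    obtain ⟨r, hr⟩ := hM Y hY _ j _ hj hcj
    have hsj := E.shortExact_of_conflation _ hcj
    have hepi := hsj.epi_g
    let s := ShortComplex.Splitting.ofExactOfRetraction _ hsj.exact r hr hepi
    refine ⟨s.s ≫ pullback.fst p h, ?_⟩
    have h1 : s.s ≫ pullback.snd p h = 𝟙 _ := s.s_g
    rw [assoc, pullback.condition, ← assoc, h1, id_comp]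
  · intro hM Y hY Z i p w hc
    obtain ⟨k, hk⟩ := hM Y hY Z M i p w hc (𝟙 M)
    have hse := E.shortExact_of_conflation _ hc
    have hm := hse.mono_f
    let s := ShortComplex.Splitting.ofExactOfSection _ hse.exact k hk hm
    exact ⟨s.r, s.f_r⟩

end Lifting

section Closure

variable {R : Type u} [Ring R] (E : ExactStructure (ModuleCat.{u} Rᵐᵒᵖ))
  (𝒴 : Set (ModuleCat.{u} Rᵐᵒᵖ))

theorem pureQuotient_mem (h𝒴 : ∀ Y ∈ 𝒴, PureInjective Y)
    (S : ShortComplex (ModuleCat.{u} Rᵐᵒᵖ)) (hS : PureSES S) (h2 : S.X₂ ∈ E.leftPerp 𝒴) :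
    S.X₃ ∈ E.leftPerp 𝒴 := by
  rw [mem_leftPerp_iff] at h2 ⊢
  intro Y hY Z C i p w hc h
  have hse := E.shortExact_of_conflation _ hc
  obtain ⟨k, hk⟩ := h2 Y hY Z C i p w hc (S.g ≫ h)
  have hmi : Mono i := hse.mono_f
  have h0 : (S.f ≫ k) ≫ p = 0 := by
    rw [assoc, hk, ← assoc, S.zero, zero_comp]
  obtain ⟨a, ha⟩ : ∃ a : S.X₁ ⟶ Y, a ≫ i = S.f ≫ k :=
    ⟨hse.exact.lift (S.f ≫ k) h0, hse.exact.lift_f _ h0⟩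
  obtain ⟨b, hb⟩ := h𝒴 Y hY S hS a
  have hepi : Epi S.g := hS.1.epi_g
  have hz : S.f ≫ (k - b ≫ i) = 0 := by
    rw [Preadditive.comp_sub, ← assoc, hb, ha, sub_self]
  refine ⟨hS.1.exact.desc (k - b ≫ i) hz, ?_⟩
  rw [← cancel_epi S.g, ← assoc, hS.1.exact.g_desc, Preadditive.sub_comp, hk, assoc, w, comp_zero,
    sub_zero]

theorem pureEpi_mem (h𝒴 : ∀ Y ∈ 𝒴, PureInjective Y) {X Z : ModuleCat.{u} Rᵐᵒᵖ} (σ : X ⟶ Z)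
    (hσ : PureEpi σ.hom) (hX : X ∈ E.leftPerp 𝒴) : Z ∈ E.leftPerp 𝒴 := by
  let S : ShortComplex (ModuleCat.{u} Rᵐᵒᵖ) := ShortComplex.mk (kernel.ι σ) σ (kernel.condition σ)
  have hepi : Epi σ := (ModuleCat.epi_iff_surjective σ).2 hσ.surjective
  refine pureQuotient_mem E 𝒴 h𝒴 S ⟨?_, ?_⟩ hX
  · exact { exact := ShortComplex.exact_kernel σ
            mono_f := inferInstanceAs (Mono (kernel.ι σ))
            epi_g := hepi }
  · intro F hF h
    obtain ⟨k, hk⟩ := hσ.lift_fp hF h.hom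
    exact ⟨ModuleCat.ofHom k, ModuleCat.hom_ext hk⟩

theorem sigma_mem {I : Type u} (X : I → ModuleCat.{u} Rᵐᵒᵖ) (hX : ∀ i, X i ∈ E.leftPerp 𝒴) :
    (∐ X) ∈ E.leftPerp 𝒴 := by
  rw [mem_leftPerp_iff]
  intro Y hY Z C i p w hc h
  choose k hk using fun a =>
    (mem_leftPerp_iff E 𝒴 _).1 (hX a) Y hY Z C i p w hc (Sigma.ι X a ≫ h)
  refine ⟨Sigma.desc k, ?_⟩
  apply Sigma.hom_ext
  intro a
  rw [← assoc, Sigma.ι_desc, hk]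

theorem colimit_mem (h𝒴 : ∀ Y ∈ 𝒴, PureInjective Y) {J : Type u} [LinearOrder J] [Nonempty J]
    (F : J ⥤ ModuleCat.{u} Rᵐᵒᵖ) (hF : ∀ j, F.obj j ∈ E.leftPerp 𝒴) (c : Cocone F)
    (hc : IsColimit c) : c.pt ∈ E.leftPerp 𝒴 := by
  refine pureEpi_mem E 𝒴 h𝒴 (Sigma.desc c.ι.app) ?_ (sigma_mem E 𝒴 _ hF)
  intro m n A z hz
  choose j₀ y₀ hy₀ using fun i => Concrete.isColimit_exists_rep F hc (z i)
  obtain ⟨j₁, hj₁⟩ := Finite.exists_le j₀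
  let y₁ : Fin n → F.obj j₁ := fun i => F.map (homOfLE (hj₁ i)) (y₀ i)
  have hy₁ : ∀ i, c.ι.app j₁ (y₁ i) = z i := by
    intro i
    rw [← hy₀ i, ← c.w (homOfLE (hj₁ i)), ConcreteCategory.comp_apply]
  have hrel : ∀ l, ∃ (k : J) (hk : j₁ ≤ k), F.map (homOfLE hk) (∑ i, A l i • y₁ i) = 0 := by
    intro l
    obtain ⟨k, f, g, hfg⟩ := Concrete.isColimit_exists_of_rep_eq F hc
      (∑ i, A l i • y₁ i) (0 : F.obj j₁) (by
        rw [map_zero, map_sum, ← hz l]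
        simp only [map_smul, hy₁])
    refine ⟨k, leOfHom f, ?_⟩
    rw [map_zero] at hfg
    exact hfg
  choose k hk hk0 using hrel
  obtain ⟨j₂', hj₂'⟩ := Finite.exists_le k
  let j₂ := max j₁ j₂'
  have h12 : j₁ ≤ j₂ := le_max_left _ _
  let y₂ : Fin n → F.obj j₂ := fun i => F.map (homOfLE h12) (y₁ i)
  have hy₂ : ∀ i, c.ι.app j₂ (y₂ i) = z i := by
    intro i
    rw [← hy₁ i, ← c.w (homOfLE h12), ConcreteCategory.comp_apply]
  have hz₂ : ∀ l, ∑ i, A l i • y₂ i = 0 := by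
    intro l
    have h2 : k l ≤ j₂ := (hj₂' l).trans (le_max_right _ _)
    have h3 := congrArg (F.map (homOfLE h2)) (hk0 l)
    rw [← ConcreteCategory.comp_apply, ← F.map_comp, map_zero] at h3
    have h4 : F.map (homOfLE h12) (∑ i, A l i • y₁ i) = 0 := h3
    rw [map_sum] at h4
    simpa only [map_smul] using h4
  refine ⟨fun i => Sigma.ι F.obj j₂ (y₂ i), fun l => ?_, fun i => ?_⟩
  · have := congrArg (Sigma.ι F.obj j₂) (hz₂ l)
    rw [map_sum, map_zero] at this
    simpa only [map_smul] using this
  · change (Sigma.desc c.ι.app) (Sigma.ι F.obj j₂ (y₂ i)) = z i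
    rw [← ConcreteCategory.comp_apply, Sigma.ι_desc]
    exact hy₂ i

theorem exists_precover (h𝒴 : ∀ Y ∈ 𝒴, PureInjective Y) (A : ModuleCat.{u} Rᵐᵒᵖ) :
    ∃ (T : ModuleCat.{u} Rᵐᵒᵖ) (f : T ⟶ A), IsPrecover (E.leftPerp 𝒴) f := by
  let W := WTerm Rᵐᵒᵖ (BMod Rᵐᵒᵖ) A
  let I : Type u := {p : (K : Submodule Rᵐᵒᵖ (W →₀ Rᵐᵒᵖ)) × (((W →₀ Rᵐᵒᵖ) ⧸ K) →ₗ[Rᵐᵒᵖ] A) //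
    ModuleCat.of Rᵐᵒᵖ ((W →₀ Rᵐᵒᵖ) ⧸ p.1) ∈ E.leftPerp 𝒴}
  let X : I → ModuleCat.{u} Rᵐᵒᵖ := fun p => ModuleCat.of Rᵐᵒᵖ ((W →₀ Rᵐᵒᵖ) ⧸ p.1.1)
  let f : ∀ p : I, X p ⟶ A := fun p => ModuleCat.ofHom p.1.2
  refine ⟨∐ X, Sigma.desc f, sigma_mem E 𝒴 X (fun p => p.2), fun X' hX' g => ?_⟩
  obtain ⟨K, σ, g', hσ, hg⟩ := exists_small_factor g.hom
  let p : I := ⟨⟨K, g'⟩, pureEpi_mem E 𝒴 h𝒴 (ModuleCat.ofHom σ) hσ hX'⟩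
  refine ⟨ModuleCat.ofHom σ ≫ Sigma.ι X p, ?_⟩
  rw [assoc, Sigma.ι_desc]
  exact ModuleCat.hom_ext hg

theorem exists_cover (h𝒴 : ∀ Y ∈ 𝒴, PureInjective Y) (A : ModuleCat.{u} Rᵐᵒᵖ) :
    ∃ (X : ModuleCat.{u} Rᵐᵒᵖ) (f : X ⟶ A), IsCover (E.leftPerp 𝒴) f := by
  let P : ObjectProperty (Over A) := fun Y => Y.left ∈ E.leftPerp 𝒴
  let V : P.FullSubcategory ⥤ ModuleCat.{u} Rᵐᵒᵖ := P.ι ⋙ Over.forget A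
  have hcl : ∀ (J : Type u) [LinearOrder J] [Nonempty J], P.IsClosedUnderColimitsOfShape J := by
    intro J _ _
    constructor
    rintro X ⟨p⟩
    exact colimit_mem E 𝒴 h𝒴 (p.diag ⋙ Over.forget A) p.prop_diag_obj _
      (isColimitOfPreserves (Over.forget A) p.isColimit)
  have hcol : ∀ (J : Type u) [LinearOrder J] [Nonempty J],
      HasColimitsOfShape J P.FullSubcategory := by
    intro J _ _
    have := hcl J
    infer_instance
  have hpres : ∀ (J : Type u) [LinearOrder J] [Nonempty J], PreservesColimitsOfShape J V := by
    intro J _ _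
    have := hcl J
    have : PreservesColimitsOfShape J P.ι := inferInstance
    infer_instance
  obtain ⟨T, f, hT, hf⟩ := exists_precover E 𝒴 h𝒴 A
  let T' : P.FullSubcategory := ⟨Over.mk f, hT⟩
  have hT' : WT T' := by
    intro Y
    obtain ⟨h, hh⟩ := hf Y.obj.left Y.property Y.obj.hom
    exact ⟨P.homMk (Over.homMk h hh)⟩
  obtain ⟨T₁, h1, h2⟩ := exists_rigid (V := V) hcol hpres T' hT'
  obtain ⟨X, hX, hXr, hXs⟩ := exists_minimal (V := V) hcol hpres T₁ h1 h2
  refine ⟨X.obj.left, X.obj.hom, ⟨X.property, fun X' hX' g => ?_⟩, fun h hh => ?_⟩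
  · obtain ⟨s⟩ := hX ⟨Over.mk g, hX'⟩
    exact ⟨s.hom.left, Over.w s.hom⟩
  · let h' : X ⟶ X := P.homMk (Over.homMk h hh)
    have hb : Function.Bijective (V.map h') := ⟨hXr _ h', hXs h'⟩
    exact (ConcreteCategory.isIso_iff_bijective h).2 hb

end Closure

end PureAux

open ExactPaper CategoryTheory Limits in
/-- **Theorem 4.4(2)**: let `ℰ` be an exact structure on `Mod R` with enough
`ℰ`-projectives and `ℰ`-injectives containing all pure exact sequences. If `𝒴` is a class
of pure injective right `R`-modules, then `^⊥𝒴` is covering and closed under pure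
quotients. -/
theorem leftPerp_covering_of_pureInjective
    {R : Type u} [Ring R]
    (E : ExactStructure (ModuleCat.{u} Rᵐᵒᵖ))
    (hproj : E.EnoughProjectives) (hinj : E.EnoughInjectives)
    (hpure : ∀ S : ShortComplex (ModuleCat.{u} Rᵐᵒᵖ), PureSES S → E.conflation S)
    (𝒴 : Set (ModuleCat.{u} Rᵐᵒᵖ)) (h𝒴 : ∀ Y ∈ 𝒴, PureInjective Y) :
    (∀ A : ModuleCat.{u} Rᵐᵒᵖ, ∃ (X : ModuleCat.{u} Rᵐᵒᵖ) (f : X ⟶ A),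
      IsCover (E.leftPerp 𝒴) f) ∧
    (∀ S : ShortComplex (ModuleCat.{u} Rᵐᵒᵖ), PureSES S →
      S.X₂ ∈ E.leftPerp 𝒴 → S.X₃ ∈ E.leftPerp 𝒴) := by
  exact ⟨fun A => PureAux.exists_cover E 𝒴 h𝒴 A, fun S hS h2 =>
    PureAux.pureQuotient_mem E 𝒴 h𝒴 S hS h2⟩
end
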